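/- Let Y be a tiled surface and let C be a non-backtracking cycle in the 1-skeleton Y^(1). If C and its inverse C* do not contain any long block or long chain, then C is a shortest representative of its free homotopy class in Y. -/

import Mathlib

/-!
Formalization preamble for "Core Surfaces" (Magee–Puder).

We work with a fixed combinatorial (CW) model.  The surface `Σ_g` has one vertex,
`2g` directed labeled edges (the label `2i` plays the role of `a_{i+1}` and `2i+1`
the role of `b_{i+1}`), and one `4g`-gon glued along `[a₁,b₁]⋯[a_g,b_g]`.

* `Gamma g` is the surface group, presented by the single relator.
* A `Complex g` is a combinatorial 2-complex with directed, labeled edges and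
  2-cells given by their boundary walks; coverings of `Σ_g` are the complexes in
  which every vertex has exactly one incoming/outgoing edge of each label, every
  walk reading the relator is closed, and every closed walk reading the relator
  bounds exactly one face (`IsCovering`).  A tiled surface is a complex that
  embeds into such a covering (`IsTiledSurface`).
* Blocks, chains, boundary cycles (via the ribbon structure coming from the fixed
  cyclic order of the `4g` half-edges around a vertex of `Σ_g`), boundary-reduced
  and strongly boundary-reduced surfaces are defined combinatorially.
* Homotopy of edge-walks is the edge-path-group homotopy: backtrack insertions and
  insertions of boundaries of (present) faces.
* `cover g J` is the covering space `J\~Σ_g` of `Σ_g` associated to a subgroup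
  `J ≤ Γ_g` (vertices = right cosets), and `coreSub g J` is the core surface of
  `J`, defined exactly as in the paper: the union of all shortest representative
  cycles of essential free-homotopy classes, together with all components of the
  complement containing finitely many `4g`-gons.
-/

noncomputable section

namespace CS

/-- Signed letters over the generators `a₁,b₁,…,a_g,b_g` of `Γ_g`
(`a_{i+1} ↦ 2i`, `b_{i+1} ↦ 2i+1`); `true` means a positive letter. -/
abbrev Letter (g : ℕ) := Fin (2 * g) × Bool

/-- The label of the `p`-th letter of the relator `[a₁,b₁][a₂,b₂]⋯[a_g,b_g]`. -/
def relLabel (g : ℕ) (p : Fin (4 * g)) : Fin (2 * g) :=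
  ⟨2 * ((p : ℕ) / 4) + ((p : ℕ) % 4) % 2, by have := p.2; omega⟩

/-- The sign of the `p`-th letter of the relator. -/
def relSign (g : ℕ) (p : Fin (4 * g)) : Bool := decide ((p : ℕ) % 4 < 2)

/-- The relator `[a₁,b₁][a₂,b₂]⋯[a_g,b_g]` as a word (list of signed letters). -/
def relatorWord (g : ℕ) : List (Letter g) :=
  (List.finRange (4 * g)).map fun p => (relLabel g p, relSign g p)

/-- The relator as an element of the free group on the `2g` generators. -/
def relatorF (g : ℕ) : FreeGroup (Fin (2 * g)) :=
  ((relatorWord g).map fun l => if l.2 then FreeGroup.of l.1 else (FreeGroup.of l.1)⁻¹).prod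

/-- The surface group `Γ_g = ⟨a₁,b₁,…,a_g,b_g ∣ [a₁,b₁]⋯[a_g,b_g]⟩`. -/
abbrev Gamma (g : ℕ) := PresentedGroup ({relatorF g} : Set (FreeGroup (Fin (2 * g))))

/-- The image of a signed letter in `Γ_g`. -/
def letterG {g : ℕ} (l : Letter g) : Gamma g :=
  if l.2 then PresentedGroup.of l.1 else (PresentedGroup.of l.1)⁻¹

/-- The image of a word in `Γ_g`. -/
def wordG {g : ℕ} (w : List (Letter g)) : Gamma g := (w.map letterG).prod

/-- `ℓ(γ^{Γ_g})`: the minimal length of a word in the generators representing the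
conjugacy class of `γ` in `Γ_g`. -/
def conjLen {g : ℕ} (γ : Gamma g) : ℕ :=
  sInf {n | ∃ w : List (Letter g), w.length = n ∧ ∃ x : Gamma g, x * wordG w * x⁻¹ = γ}

/-! ### Half-edge positions around a vertex of `Σ_g`

The `4g` half-edges around the vertex `o` of `Σ_g` come in the (clockwise) cyclic
order `a₁`-out, `b₁`-in, `a₁`-in, `b₁`-out, `a₂`-out, `b₂`-in, `a₂`-in, `b₂`-out, …
-/

/-- Position of the outgoing `ℓ`-labeled half-edge in the cyclic order. -/
def posOut {g : ℕ} (ℓ : Fin (2 * g)) : ℕ :=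
  if (ℓ : ℕ) % 2 = 0 then 2 * (ℓ : ℕ) else 2 * (ℓ : ℕ) + 1

/-- Position of the incoming `ℓ`-labeled half-edge in the cyclic order. -/
def posIn {g : ℕ} (ℓ : Fin (2 * g)) : ℕ :=
  if (ℓ : ℕ) % 2 = 0 then 2 * (ℓ : ℕ) + 2 else 2 * (ℓ : ℕ) - 1

/-- The position of the half-edge through which a traversal of a dart with signed
letter `s` *arrives* at its terminal vertex. -/
def posArr {g : ℕ} (s : Letter g) : ℕ := if s.2 then posIn s.1 else posOut s.1

/-- The position of the half-edge through which a traversal of a dart with signed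
letter `s` *leaves* its initial vertex. -/
def posLv {g : ℕ} (s : Letter g) : ℕ := if s.2 then posOut s.1 else posIn s.1

/-- The number of half-edges strictly between the arrival half-edge of `s` and the
departure half-edge of `t`, in the clockwise cyclic order of the `4g` half-edges
around a vertex. -/
def gapN {g : ℕ} (s t : Letter g) : ℕ := (posLv t + 4 * g - (posArr s + 1)) % (4 * g)

/-! ### Combinatorial complexes -/

/-- A combinatorial at-most-2-dimensional CW-complex with directed edges labeled by
the generators of `Γ_g`, and 2-cells recorded by their boundary walks (lists of
darts, i.e. edges with a direction of traversal). -/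
structure Complex (g : ℕ) where
  V : Type
  E : Type
  F : Type
  src : E → V
  dst : E → V
  lab : E → Fin (2 * g)
  bdry : F → List (E × Bool)

namespace Complex

variable {g : ℕ} (Y : Complex g)

/-- Darts: edges together with a direction of traversal (`true` = forward). -/
abbrev D := Y.E × Bool

/-- The initial vertex of a dart. -/
def dTail (d : Y.D) : Y.V := if d.2 then Y.src d.1 else Y.dst d.1

/-- The terminal vertex of a dart. -/
def dHead (d : Y.D) : Y.V := if d.2 then Y.dst d.1 else Y.src d.1

/-- The reversal of a dart. -/
def dRev (d : Y.D) : Y.D := (d.1, !d.2)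

/-- The signed letter read by a dart. -/
def dLet (d : Y.D) : Letter g := (Y.lab d.1, d.2)

/-- The word read along a list of darts. -/
def wordOf (l : List Y.D) : List (Letter g) := l.map Y.dLet

/-- The reversed walk. -/
def revW (l : List Y.D) : List Y.D := (l.map Y.dRev).reverse

/-- `WalkFrom u v l` : `l` is a walk (edge-path) from `u` to `v`. -/
inductive WalkFrom : Y.V → Y.V → List Y.D → Prop
  | nil (v : Y.V) : WalkFrom v v []
  | cons (d : Y.D) {v : Y.V} {l : List Y.D} :
      WalkFrom (Y.dHead d) v l → WalkFrom (Y.dTail d) v (d :: l)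

/-- All darts of `l` use edges from the set `sE`. -/
def InSet (sE : Set Y.E) (l : List Y.D) : Prop := ∀ d ∈ l, d.1 ∈ sE

/-- Two darts are adjacent (can be traversed consecutively). -/
def adj (d d' : Y.D) : Prop := Y.dHead d = Y.dTail d'

/-- A nonempty closed walk. -/
def IsCycle (c : List Y.D) : Prop := c ≠ [] ∧ ∃ v, Y.WalkFrom v v c

/-- **P1**: at most one incoming and at most one outgoing `ℓ`-labeled edge at every
vertex, for every label `ℓ`. -/
def P1 : Prop :=
  (∀ e e' : Y.E, Y.src e = Y.src e' → Y.lab e = Y.lab e' → e = e') ∧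
  (∀ e e' : Y.E, Y.dst e = Y.dst e' → Y.lab e = Y.lab e' → e = e')

/-- **P2**: every walk reading a word equal to `1` in `Γ_g` is closed. -/
def P2 : Prop :=
  ∀ (u v : Y.V) (l : List Y.D), Y.WalkFrom u v l → wordG (Y.wordOf l) = 1 → u = v

/-- **P3**: every 2-cell is glued along a closed walk reading the relator
`[a₁,b₁]⋯[a_g,b_g]`, and every such closed walk bounds at most one 2-cell. -/
def P3 : Prop :=
  (∀ f : Y.F, (∃ v, Y.WalkFrom v v (Y.bdry f)) ∧ Y.wordOf (Y.bdry f) = relatorWord g) ∧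
  Function.Injective Y.bdry

/-- A combinatorial covering space of `Σ_g`: every vertex has exactly one outgoing
and one incoming edge of each label, every walk reading the relator is closed, and
every closed walk reading the relator bounds exactly one `4g`-gon. -/
def IsCovering : Prop :=
  Y.P1 ∧ Y.P3 ∧
  (∀ (v : Y.V) (ℓ : Fin (2 * g)), ∃ e, Y.src e = v ∧ Y.lab e = ℓ) ∧
  (∀ (v : Y.V) (ℓ : Fin (2 * g)), ∃ e, Y.dst e = v ∧ Y.lab e = ℓ) ∧
  (∀ (u v : Y.V) (l : List Y.D), Y.WalkFrom u v l → Y.wordOf l = relatorWord g → u = v) ∧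
  (∀ (v : Y.V) (l : List Y.D), Y.WalkFrom v v l → Y.wordOf l = relatorWord g →
    ∃ f, Y.bdry f = l)

end Complex

/-- A morphism of labeled complexes: maps cells to cells of the same dimension and
respects sources, targets, labels and face boundaries (equivalently, commutes with
the immersions to `Σ_g`). -/
structure Hom {g : ℕ} (Y Z : Complex g) where
  mV : Y.V → Z.V
  mE : Y.E → Z.E
  mF : Y.F → Z.F
  hsrc : ∀ e, Z.src (mE e) = mV (Y.src e)
  hdst : ∀ e, Z.dst (mE e) = mV (Y.dst e)
  hlab : ∀ e, Z.lab (mE e) = Y.lab e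
  hbdry : ∀ f, Z.bdry (mF f) = (Y.bdry f).map fun d => (mE d.1, d.2)

namespace Hom

variable {g : ℕ} {Y Z : Complex g}

/-- The induced map on darts. -/
def mD (φ : Hom Y Z) (d : Y.D) : Z.D := (φ.mE d.1, d.2)

/-- Injectivity (an embedding of complexes). -/
def Inj (φ : Hom Y Z) : Prop :=
  Function.Injective φ.mV ∧ Function.Injective φ.mE ∧ Function.Injective φ.mF

end Hom

namespace Complex

variable {g : ℕ} (Y : Complex g)

/-- A tiled surface: a complex which embeds into a combinatorial covering space of
`Σ_g` (compatibly with directions and labels). -/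
def IsTiledSurface : Prop :=
  ∃ Z : Complex g, Z.IsCovering ∧ ∃ φ : Hom Y Z, φ.Inj

/-- Connectivity of a complex (any two vertices are joined by a walk). -/
def Connected : Prop := Nonempty Y.V ∧ ∀ v w : Y.V, ∃ l, Y.WalkFrom v w l

/-! ### Blocks and chains -/

/-- A block: a nonempty walk such that successive darts have no half-edges between
them (hence it reads a subword of the cyclic relator, of length at most `4g`). -/
def IsBlock (l : List Y.D) : Prop :=
  l ≠ [] ∧ l.length ≤ 4 * g ∧
  List.Chain' (fun d d' => Y.adj d d' ∧ gapN (Y.dLet d) (Y.dLet d') = 0) l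

/-- Two blocks are consecutive: concatenation is a walk and there is exactly one
half-edge between the last dart of the first and the first dart of the second. -/
def chainStep (b b' : List Y.D) : Prop :=
  ∃ d d', b.getLast? = some d ∧ b'.head? = some d' ∧ Y.adj d d' ∧
    gapN (Y.dLet d) (Y.dLet d') = 1

/-- A chain: a nonempty sequence of consecutive blocks. -/
def IsChain (bs : List (List Y.D)) : Prop :=
  bs ≠ [] ∧ (∀ b ∈ bs, Y.IsBlock b) ∧ List.Chain' Y.chainStep bs

/-- A cyclic chain: a chain whose blocks pave an entire cycle. -/
def IsCyclicChain (bs : List (List Y.D)) : Prop :=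
  Y.IsChain bs ∧ ∃ b b', bs.getLast? = some b ∧ bs.head? = some b' ∧ Y.chainStep b b'

/-- A long chain: a chain of consecutive blocks of lengths `2g, 2g−1, …, 2g−1, 2g`. -/
def IsLongChain (bs : List (List Y.D)) : Prop :=
  Y.IsChain bs ∧ ∃ k, bs.map List.length = 2 * g :: (List.replicate k (2 * g - 1) ++ [2 * g])

/-- A half-chain: a cyclic chain all of whose blocks have length `2g − 1`. -/
def IsHalfChain (bs : List (List Y.D)) : Prop :=
  Y.IsCyclicChain bs ∧ ∀ b ∈ bs, b.length = 2 * g - 1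

/-! ### Boundary cycles of the thick version (relative to sets of present edges and
faces), via the ribbon structure -/

/-- `nextD sE d d'`: among darts (with edge in `sE`) leaving the head of `d`, the
dart `d'` is the first one in clockwise order after the arrival half-edge of `d`.
This is the successor map whose orbits trace the boundary components of the thick
version of the ribbon graph. -/
def nextD (sE : Set Y.E) (d d' : Y.D) : Prop :=
  d'.1 ∈ sE ∧ Y.adj d d' ∧
  ∀ d'' : Y.D, d''.1 ∈ sE → Y.adj d d'' →
    gapN (Y.dLet d) (Y.dLet d') ≤ gapN (Y.dLet d) (Y.dLet d'')

/-- The corner between the consecutive darts `d, d'` is filled by a face from `sF`. -/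
def faceStep (sF : Set Y.F) (d d' : Y.D) : Prop :=
  ∃ f ∈ sF, [d, d'] <:+: (Y.bdry f ++ Y.bdry f)

/-- One step along the boundary of the thick version. -/
def bStep (sE : Set Y.E) (sF : Set Y.F) (d d' : Y.D) : Prop :=
  d.1 ∈ sE ∧ Y.nextD sE d d' ∧ ¬ Y.faceStep sF d d'

/-- A (finite segment of a) boundary cycle of the thick version. -/
def BPath (sE : Set Y.E) (sF : Set Y.F) (l : List Y.D) : Prop :=
  l ≠ [] ∧ Y.InSet sE l ∧ List.Chain' (Y.bStep sE sF) l

/-- A (finite) boundary cycle of the thick version. -/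
def BCycle (sE : Set Y.E) (sF : Set Y.F) (l : List Y.D) : Prop :=
  Y.BPath sE sF l ∧ ∃ d d', l.getLast? = some d ∧ l.head? = some d' ∧ Y.bStep sE sF d d'

/-- A dart lying on the boundary of the thick version. -/
def IsBDart (sE : Set Y.E) (sF : Set Y.F) (d : Y.D) : Prop :=
  d.1 ∈ sE ∧ ∃ d', Y.nextD sE d d' ∧ ¬ Y.faceStep sF d d'

/-- Boundary reduced: no boundary cycle contains a long block (length `≥ 2g+1`) or
a long chain. -/
def BoundaryReduced (sE : Set Y.E) (sF : Set Y.F) : Prop :=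
  (∀ l, Y.BPath sE sF l → ¬ (Y.IsBlock l ∧ 2 * g + 1 ≤ l.length)) ∧
  (∀ bs, Y.IsLongChain bs → ¬ Y.BPath sE sF bs.flatten)

/-- Strongly boundary reduced: no boundary cycle contains a half-block (length
exactly `2g`) or a half-chain. -/
def StronglyBoundaryReduced (sE : Set Y.E) (sF : Set Y.F) : Prop :=
  (∀ l, Y.BPath sE sF l → ¬ (Y.IsBlock l ∧ l.length = 2 * g)) ∧
  (∀ bs, Y.IsHalfChain bs → ¬ Y.BCycle sE sF bs.flatten)

/-! ### Combinatorial homotopy of walks -/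

/-- A closed walk traversing the boundary of a face from `sF` (in either direction,
starting anywhere). -/
def faceLoop (sF : Set Y.F) (b : List Y.D) : Prop :=
  ∃ f ∈ sF, ∃ n, b = (Y.bdry f).rotate n ∨ b = Y.revW ((Y.bdry f).rotate n)

/-- Elementary homotopy move: insertion of a backtrack or of a face boundary. -/
def elemMove (sE : Set Y.E) (sF : Set Y.F) (l l' : List Y.D) : Prop :=
  (∃ (l₁ l₂ : List Y.D) (d : Y.D), d.1 ∈ sE ∧ l = l₁ ++ l₂ ∧ l' = l₁ ++ d :: Y.dRev d :: l₂) ∨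
  (∃ l₁ l₂ b, Y.faceLoop sF b ∧ l = l₁ ++ l₂ ∧ l' = l₁ ++ b ++ l₂)

/-- Homotopy (rel endpoints) of walks from `u` to `v`, inside the subcomplex with
edge set `sE` and face set `sF`. -/
def Homotopic (sE : Set Y.E) (sF : Set Y.F) (u v : Y.V) (c c' : List Y.D) : Prop :=
  Relation.EqvGen
    (fun a b =>
      Y.WalkFrom u v a ∧ Y.WalkFrom u v b ∧ Y.InSet sE a ∧ Y.InSet sE b ∧
        (Y.elemMove sE sF a b ∨ Y.elemMove sE sF b a)) c c'

/-- A closed walk which is null-homotopic. -/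
def NullHomotopic (sE : Set Y.E) (sF : Set Y.F) (c : List Y.D) : Prop :=
  ∃ v, Y.WalkFrom v v c ∧ Y.Homotopic sE sF v v c []

/-- An essential cycle: a nonempty closed walk which is not null-homotopic. -/
def Essential (sE : Set Y.E) (sF : Set Y.F) (c : List Y.D) : Prop :=
  Y.IsCycle c ∧ Y.InSet sE c ∧ ¬ Y.NullHomotopic sE sF c

/-- Free homotopy of closed walks. -/
def FreelyHomotopic (sE : Set Y.E) (sF : Set Y.F) (c c' : List Y.D) : Prop :=
  ∃ u v q, Y.WalkFrom u u c ∧ Y.WalkFrom v v c' ∧ Y.WalkFrom u v q ∧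
    Y.InSet sE q ∧ Y.InSet sE c ∧ Y.InSet sE c' ∧
    Y.Homotopic sE sF u u c (q ++ c' ++ Y.revW q)

/-- `c` is a shortest representative of its free homotopy class. -/
def ShortestRep (sE : Set Y.E) (sF : Set Y.F) (c : List Y.D) : Prop :=
  ∀ c', Y.FreelyHomotopic sE sF c c' → c.length ≤ c'.length

end Complex

/-- `s` occurs as a contiguous subword of the cyclic word `c`. -/
def cycContains {α : Type*} (c s : List α) : Prop :=
  s ≠ [] ∧ s.length ≤ c.length ∧ s <:+: (c ++ c)

namespace Complex

variable {g : ℕ} (Y : Complex g)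

/-- The cycle `c` contains no long block and no long chain. -/
def NoLongBlockOrChainCyc (c : List Y.D) : Prop :=
  (∀ s, cycContains c s → ¬ (Y.IsBlock s ∧ 2 * g + 1 ≤ s.length)) ∧
  (∀ bs, Y.IsLongChain bs → ¬ cycContains c bs.flatten)

/-- A (cyclically) non-backtracking cycle. -/
def NonBacktrackingCyc (c : List Y.D) : Prop :=
  ¬ ∃ d : Y.D, cycContains c [d, Y.dRev d]

/-- A cycle which is essential and a shortest representative of its
free homotopy class. -/
def GoodCycle (c : List Y.D) : Prop :=
  Y.IsCycle c ∧ Y.Essential Set.univ Set.univ c ∧ Y.ShortestRep Set.univ Set.univ c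

/-! ### Cells and components of complements -/

/-- The cells of a complex. -/
def Cell := Y.V ⊕ Y.E ⊕ Y.F

def vCell (v : Y.V) : Y.Cell := Sum.inl v
def eCell (e : Y.E) : Y.Cell := Sum.inr (Sum.inl e)
def fCell (f : Y.F) : Y.Cell := Sum.inr (Sum.inr f)

/-- Basic incidence of (open) cells. -/
def inc0 : Y.Cell → Y.Cell → Prop := fun c c' =>
  match c, c' with
  | Sum.inl v, Sum.inr (Sum.inl e) => Y.src e = v ∨ Y.dst e = v
  | Sum.inl v, Sum.inr (Sum.inr f) => ∃ d ∈ Y.bdry f, Y.dTail d = v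
  | Sum.inr (Sum.inl e), Sum.inr (Sum.inr f) => ∃ b, (e, b) ∈ Y.bdry f
  | _, _ => False

/-- Symmetrized incidence of cells. -/
def incid (c c' : Y.Cell) : Prop := Y.inc0 c c' ∨ Y.inc0 c' c

end Complex

/-- A triple of subsets of the cells of a complex `Y` (a prospective subcomplex). -/
structure SubC {g : ℕ} (Y : Complex g) where
  sV : Set Y.V
  sE : Set Y.E
  sF : Set Y.F

namespace SubC

variable {g : ℕ} {Y : Complex g}

/-- `S` is an actual subcomplex: closed under taking boundaries of cells. -/
def IsSub (S : SubC Y) : Prop :=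
  (∀ e ∈ S.sE, Y.src e ∈ S.sV ∧ Y.dst e ∈ S.sV) ∧
  (∀ f ∈ S.sF, ∀ d ∈ Y.bdry f, d.1 ∈ S.sE)

/-- Containment of subcomplexes. -/
def le (S T : SubC Y) : Prop := S.sV ⊆ T.sV ∧ S.sE ⊆ T.sE ∧ S.sF ⊆ T.sF

/-- Compactness: finitely many cells. -/
def Compact (S : SubC Y) : Prop := S.sV.Finite ∧ S.sE.Finite ∧ S.sF.Finite

/-- Connectivity of the subcomplex. -/
def Connected (S : SubC Y) : Prop :=
  S.sV.Nonempty ∧ ∀ v ∈ S.sV, ∀ w ∈ S.sV, ∃ l, Y.WalkFrom v w l ∧ Y.InSet S.sE l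

/-- Image of a subcomplex under a morphism. -/
def image {Z : Complex g} (φ : Hom Y Z) (S : SubC Y) : SubC Z :=
  ⟨φ.mV '' S.sV, φ.mE '' S.sE, φ.mF '' S.sF⟩

end SubC

/-- The whole complex, as a subcomplex of itself. -/
def fullSub {g : ℕ} (Y : Complex g) : SubC Y := ⟨Set.univ, Set.univ, Set.univ⟩

namespace Complex

variable {g : ℕ} (Y : Complex g)

/-- Membership of a cell in a subcomplex. -/
def inSub (S : SubC Y) : Y.Cell → Prop := fun c =>
  match c with
  | Sum.inl v => v ∈ S.sV
  | Sum.inr (Sum.inl e) => e ∈ S.sE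
  | Sum.inr (Sum.inr f) => f ∈ S.sF

/-- Reachability of cells through the open complement of the subcomplex `S`
(= lying in the same connected component of the complement). -/
def reachS (S : SubC Y) (c c' : Y.Cell) : Prop :=
  Relation.ReflTransGen (fun a b => Y.incid a b ∧ ¬ Y.inSub S a ∧ ¬ Y.inSub S b) c c'

end Complex

/-- The closure (as a subcomplex) of the connected component of the cell `c₀` in the
complement of the subcomplex `S`. -/
def compCl {g : ℕ} (Y : Complex g) (S : SubC Y) (c₀ : Y.Cell) : SubC Y :=
  let cF : Set Y.F := {f | Y.reachS S c₀ (Y.fCell f)}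
  let cE : Set Y.E :=
    {e | Y.reachS S c₀ (Y.eCell e)} ∪ {e | ∃ f ∈ cF, ∃ b, (e, b) ∈ Y.bdry f}
  let cV : Set Y.V :=
    {v | Y.reachS S c₀ (Y.vCell v)} ∪ {v | ∃ e ∈ cE, Y.src e = v ∨ Y.dst e = v}
  ⟨cV, cE, cF⟩

/-- The subcomplex has exactly one boundary cycle (which covers all boundary darts). -/
def OneBdry {g : ℕ} (Y : Complex g) (S : SubC Y) : Prop :=
  ∃ δ, Y.BCycle S.sE S.sF δ ∧ ∀ d, Y.IsBDart S.sE S.sF d → d ∈ δ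

/-- The subcomplex has exactly two (disjoint) boundary cycles, covering all
boundary darts. -/
def TwoBdry {g : ℕ} (Y : Complex g) (S : SubC Y) : Prop :=
  ∃ δ₁ δ₂, Y.BCycle S.sE S.sF δ₁ ∧ Y.BCycle S.sE S.sF δ₂ ∧ δ₁.Disjoint δ₂ ∧
    ∀ d, Y.IsBDart S.sE S.sF d → d ∈ δ₁ ∨ d ∈ δ₂

/-- The boundary-reduced closure of `S` inside `Y`: the intersection of all
intermediate boundary reduced subcomplexes. -/
def BRcl {g : ℕ} (Y : Complex g) (S : SubC Y) : SubC Y where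
  sV := ⋂ T ∈ {T : SubC Y | T.IsSub ∧ S.le T ∧ Y.BoundaryReduced T.sE T.sF}, T.sV
  sE := ⋂ T ∈ {T : SubC Y | T.IsSub ∧ S.le T ∧ Y.BoundaryReduced T.sE T.sF}, T.sE
  sF := ⋂ T ∈ {T : SubC Y | T.IsSub ∧ S.le T ∧ Y.BoundaryReduced T.sE T.sF}, T.sF

/-- The strongly-boundary-reduced closure of `S` inside `Y`. -/
def SBRcl {g : ℕ} (Y : Complex g) (S : SubC Y) : SubC Y where
  sV := ⋂ T ∈ {T : SubC Y | T.IsSub ∧ S.le T ∧ Y.StronglyBoundaryReduced T.sE T.sF}, T.sV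
  sE := ⋂ T ∈ {T : SubC Y | T.IsSub ∧ S.le T ∧ Y.StronglyBoundaryReduced T.sE T.sF}, T.sE
  sF := ⋂ T ∈ {T : SubC Y | T.IsSub ∧ S.le T ∧ Y.StronglyBoundaryReduced T.sE T.sF}, T.sF

/-- An isomorphism between the subcomplex `S` of `Y` and the subcomplex `T` of `Z`. -/
structure SubEquiv {g : ℕ} (Y : Complex g) (S : SubC Y) (Z : Complex g) (T : SubC Z) where
  fV : Y.V → Z.V
  fE : Y.E → Z.E
  fF : Y.F → Z.F
  bijV : Set.BijOn fV S.sV T.sV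
  bijE : Set.BijOn fE S.sE T.sE
  bijF : Set.BijOn fF S.sF T.sF
  hsrc : ∀ e ∈ S.sE, Z.src (fE e) = fV (Y.src e)
  hdst : ∀ e ∈ S.sE, Z.dst (fE e) = fV (Y.dst e)
  hlab : ∀ e ∈ S.sE, Z.lab (fE e) = Y.lab e
  hbdry : ∀ f ∈ S.sF, Z.bdry (fF f) = (Y.bdry f).map fun d => (fE d.1, d.2)

/-- `FunnelComponent Y S c₀`: the connected component of the cell `c₀` in the
complement of the subcomplex `S` is a twice-punctured sphere with one funnel and
one fake-puncture.  Rendered combinatorially: the component contains infinitely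
many `4g`-gons (the funnel); there is a boundary cycle `δ` of `S` adjacent to the
component, it is unique (one fake-puncture), and every closed walk inside the
closure of the component is freely homotopic there to a power of `δ` or of its
inverse (so the closure is a half-open annulus bounded by `δ`). -/
def FunnelComponent {g : ℕ} (Y : Complex g) (S : SubC Y) (c₀ : Y.Cell) : Prop :=
  {f : Y.F | Y.reachS S c₀ (Y.fCell f)}.Infinite ∧
  ∃ δ : List Y.D, Y.BCycle S.sE S.sF δ ∧
    (∃ d ∈ δ, ∃ c', Y.incid (Y.eCell d.1) c' ∧ Y.reachS S c₀ c') ∧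
    (∀ δ', Y.BCycle S.sE S.sF δ' →
      (∃ d ∈ δ', ∃ c', Y.incid (Y.eCell d.1) c' ∧ Y.reachS S c₀ c') →
      ∃ n, δ' = δ.rotate n) ∧
    (∀ (v : Y.V) (l : List Y.D), Y.WalkFrom v v l →
      Y.InSet ({e | Y.reachS S c₀ (Y.eCell e)} ∪ {e | ∃ b, (e, b) ∈ δ}) l →
      ∃ n,
        Y.FreelyHomotopic ({e | Y.reachS S c₀ (Y.eCell e)} ∪ {e | ∃ b, (e, b) ∈ δ})
          {f | Y.reachS S c₀ (Y.fCell f)} l ((List.replicate n δ).flatten) ∨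
        Y.FreelyHomotopic ({e | Y.reachS S c₀ (Y.eCell e)} ∪ {e | ∃ b, (e, b) ∈ δ})
          {f | Y.reachS S c₀ (Y.fCell f)} l ((List.replicate n (Y.revW δ)).flatten))

/-- `Y` contains a funnel: an essential cycle `δ` of `Y` cutting off an infinite
region of `Y` which is attached to the rest of `Y` only along `δ`, contains no
boundary of `Y`, and is a half-open annulus (every loop inside is freely homotopic
to a power of `δ`); i.e. an end of `Y` which is a puncture of the ambient covering. -/
def HasFunnel {g : ℕ} (Y : Complex g) : Prop :=
  ∃ (δ : List Y.D) (sE : Set Y.E) (sF : Set Y.F),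
    Y.IsCycle δ ∧ Y.Essential Set.univ Set.univ δ ∧
    (∀ d ∈ δ, d.1 ∉ sE) ∧ sE.Nonempty ∧ sF.Infinite ∧
    (∀ f ∈ sF, ∀ d ∈ Y.bdry f, d.1 ∈ sE ∨ ∃ b, (d.1, b) ∈ δ) ∧
    (∀ f : Y.F, (∃ d ∈ Y.bdry f, d.1 ∈ sE) → f ∈ sF) ∧
    (∀ d : Y.D, d.1 ∈ sE → ¬ Y.IsBDart Set.univ Set.univ d) ∧
    (∀ v : Y.V, (∃ e ∈ sE, Y.src e = v ∨ Y.dst e = v) → (∀ d ∈ δ, Y.dTail d ≠ v) →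
      ∀ e' : Y.E, (Y.src e' = v ∨ Y.dst e' = v) → e' ∈ sE) ∧
    (∀ (v : Y.V) (l : List Y.D), Y.WalkFrom v v l →
      Y.InSet (sE ∪ {e | ∃ b, (e, b) ∈ δ}) l →
      ∃ n,
        Y.FreelyHomotopic (sE ∪ {e | ∃ b, (e, b) ∈ δ}) sF l
          ((List.replicate n δ).flatten) ∨
        Y.FreelyHomotopic (sE ∪ {e | ∃ b, (e, b) ∈ δ}) sF l
          ((List.replicate n (Y.revW δ)).flatten))

/-- The fundamental group of `Y` is cyclic: some closed walk `c` generates all free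
homotopy classes of loops.  (For a connected surface this is *equivalent to NOT
having genus ≥ 1 or at least 3 boundary components/punctures*.) -/
def CyclicPi1 {g : ℕ} (Y : Complex g) : Prop :=
  ∃ c : List Y.D, ∀ (v : Y.V) (l : List Y.D), Y.WalkFrom v v l →
    ∃ n,
      Y.FreelyHomotopic Set.univ Set.univ l ((List.replicate n c).flatten) ∨
      Y.FreelyHomotopic Set.univ Set.univ l ((List.replicate n (Y.revW c)).flatten)

/-! ### The covering space `J\~Σ_g` and the core surface of `J` -/

/-- Right cosets `Jx` of `J` in `Γ_g` — the vertices (and faces) of `J\~Σ_g`. -/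
abbrev Cos (g : ℕ) (J : Subgroup (Gamma g)) := Quotient (QuotientGroup.rightRel J)

/-- The coset `Jx`. -/
def mkCos (g : ℕ) (J : Subgroup (Gamma g)) (x : Gamma g) : Cos g J :=
  Quotient.mk _ x

/-- Right multiplication on right cosets. -/
def rmul (g : ℕ) (J : Subgroup (Gamma g)) (x : Gamma g) : Cos g J → Cos g J :=
  Quotient.map (· * x) (by
    intro a b hab
    have h1 : b * a⁻¹ ∈ J := QuotientGroup.rightRel_apply.mp hab
    refine QuotientGroup.rightRel_apply.mpr ?_
    have h2 : b * x * (a * x)⁻¹ = b * a⁻¹ := by group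
    rw [h2]; exact h1)

/-- The walk in `J\~Σ_g` starting at a vertex and reading a given word. -/
def relWalk (g : ℕ) (J : Subgroup (Gamma g)) :
    Cos g J → List (Letter g) → List ((Cos g J × Fin (2 * g)) × Bool)
  | _, [] => []
  | v, (ℓ, true) :: w =>
      ((v, ℓ), true) :: relWalk g J (rmul g J (PresentedGroup.of ℓ) v) w
  | v, (ℓ, false) :: w =>
      ((rmul g J (PresentedGroup.of ℓ)⁻¹ v, ℓ), false) ::
        relWalk g J (rmul g J (PresentedGroup.of ℓ)⁻¹ v) w

/-- The covering space `Υ = J\~Σ_g` of `Σ_g` corresponding to the subgroup `J`,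
with the CW-structure pulled back from `Σ_g`: vertices and `4g`-gons are the right
cosets of `J`, and each vertex carries one outgoing edge per label. -/
def cover (g : ℕ) (J : Subgroup (Gamma g)) : Complex g where
  V := Cos g J
  E := Cos g J × Fin (2 * g)
  F := Cos g J
  src e := e.1
  dst e := rmul g J (PresentedGroup.of e.2) e.1
  lab e := e.2
  bdry v := relWalk g J v (relatorWord g)

/-- The map `J₁\~Σ_g → J₂\~Σ_g` on vertices, for `J₁ ≤ J₂`. -/
def coverMapV {g : ℕ} {J₁ J₂ : Subgroup (Gamma g)} (h : J₁ ≤ J₂) :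
    Cos g J₁ → Cos g J₂ :=
  Quotient.map id (by
    intro a b hab
    have h1 : b * a⁻¹ ∈ J₁ := QuotientGroup.rightRel_apply.mp hab
    exact QuotientGroup.rightRel_apply.mpr (h h1))

/-- The natural covering morphism on edges. -/
def coverMapE {g : ℕ} {J₁ J₂ : Subgroup (Gamma g)} (h : J₁ ≤ J₂)
    (e : (cover g J₁).E) : (cover g J₂).E :=
  (coverMapV h e.1, e.2)

/-- The natural covering morphism on darts. -/
def coverMapD {g : ℕ} {J₁ J₂ : Subgroup (Gamma g)} (h : J₁ ≤ J₂)
    (d : (cover g J₁).D) : (cover g J₂).D :=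
  (coverMapE h d.1, d.2)

/-- The cycle `c` in `J\~Σ_g` represents the conjugacy class of `γ` in `J`
(conjugacy classes in `J` ↔ free homotopy classes of essential loops in `J\~Σ_g`). -/
def RepCls {g : ℕ} (J : Subgroup (Gamma g)) (c : List ((cover g J).D))
    (γ : Gamma g) : Prop :=
  ∃ x j : Gamma g, j ∈ J ∧
    (cover g J).WalkFrom (mkCos g J x) (mkCos g J x) c ∧
    x * wordG ((cover g J).wordOf c) * x⁻¹ = j * γ * j⁻¹

/-- Step (i) of the definition of the core surface: the edges lying on some
shortest representative cycle of an essential free homotopy class. -/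
def coreE1 (g : ℕ) (J : Subgroup (Gamma g)) : Set (cover g J).E :=
  {e | ∃ c, (cover g J).GoodCycle c ∧ ∃ b, (e, b) ∈ c}

/-- The vertices of step (i) of the definition of the core surface. -/
def coreV1 (g : ℕ) (J : Subgroup (Gamma g)) : Set (cover g J).V :=
  {v | ∃ e ∈ coreE1 g J, (cover g J).src e = v ∨ (cover g J).dst e = v}

/-- Step (i) of the definition of the core surface, as a subcomplex of `J\~Σ_g`. -/
def coreS1 (g : ℕ) (J : Subgroup (Gamma g)) : SubC (cover g J) :=
  ⟨coreV1 g J, coreE1 g J, ∅⟩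

/-- A cell of `J\~Σ_g` lying in a connected component of the complement of step (i)
which contains only finitely many `4g`-gons. -/
def coreFin (g : ℕ) (J : Subgroup (Gamma g)) (c : (cover g J).Cell) : Prop :=
  ¬ (cover g J).inSub (coreS1 g J) c ∧
  {f : (cover g J).F | (cover g J).reachS (coreS1 g J) c ((cover g J).fCell f)}.Finite

open Classical in
/-- The core surface `Core(J)` of a subgroup `J ≤ Γ_g`, as a subcomplex of
`Υ = J\~Σ_g`: (i) the union of all shortest representative cycles of essential
free homotopy classes in `Υ`, together with (ii) all connected components of the
complement containing finitely many `4g`-gons.  For the trivial subgroup it is a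
single vertex. -/
def coreSub (g : ℕ) (J : Subgroup (Gamma g)) : SubC (cover g J) :=
  if J = ⊥ then ⟨{mkCos g J 1}, ∅, ∅⟩
  else
    ⟨coreV1 g J ∪ {v | coreFin g J ((cover g J).vCell v)},
     coreE1 g J ∪ {e | coreFin g J ((cover g J).eCell e)},
     {f | coreFin g J ((cover g J).fCell f)}⟩

/-!
The surface group acts on the tiling of the hyperbolic plane by regular `4g`-gons with `4g` of them
around each vertex.  Call the perpendicular bisector of an edge its wall; the walls of opposite
sides of a polygon coincide, so a closed path that bounds polygons crosses every wall an even number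
of times.  Hence a path that crosses no wall twice is geodesic: each of its walls separates its
endpoints.

A path with no long block or long chain on either side never returns to the wall of its first edge.
In Minkowski space this says that a coordinate of its endpoint is positive, which follows by
induction on the length: after `k` turns `0` and one turn `t`, the new wall does not cross the first
one, unless `k = 2g - 1` and `t = 1`.  In this exceptional case walking around the polygon on its
other side replaces the turns `0, …, 0, 1` by the single turn `0`, and the shorter path is still
free of long blocks and chains.

A long block or chain inside a power of `C` yields one inside `C`, so every power of `C` is
geodesic.  If `C` is freely homotopic to `C'` along `q`, then `k|C| ≤ k|C'| + 2|q|` for all `k`,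
whence `|C| ≤ |C'|`.
-/

section Minkowski

open Real

/-- Minkowski space `ℝ^{2,1}`, whose future unit hyperboloid is the hyperbolic plane; the last
coordinate is time. -/
abbrev Minkowski := ℝ × ℝ × ℝ

/-- The Lorentzian form of signature `(2,1)`.  A vector of square `1` represents the geodesic of the
hyperbolic plane orthogonal to it, together with a choice of positive side. -/
def lorentz : LinearMap.BilinForm ℝ Minkowski :=
  LinearMap.mk₂ ℝ (fun x y => x.1 * y.1 + x.2.1 * y.2.1 - x.2.2 * y.2.2)
    (fun x x' y => by simp only [Prod.fst_add, Prod.snd_add]; ring)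
    (fun a x y => by simp only [Prod.smul_fst, Prod.smul_snd, smul_eq_mul]; ring)
    (fun x y y' => by simp only [Prod.fst_add, Prod.snd_add]; ring)
    (fun a x y => by simp only [Prod.smul_fst, Prod.smul_snd, smul_eq_mul]; ring)

theorem lorentz_apply (x y : Minkowski) :
    lorentz x y = x.1 * y.1 + x.2.1 * y.2.1 - x.2.2 * y.2.2 := rfl

/-- The open future cone, a projective model of the hyperbolic plane. -/
def futureCone : Set Minkowski := {x | 0 < x.2.2 ∧ x.1 ^ 2 + x.2.1 ^ 2 < x.2.2 ^ 2}

/-- The linear isometries of the Lorentzian form that preserve the future cone. -/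
def orthochronous : Submonoid (Minkowski ≃ₗ[ℝ] Minkowski) where
  carrier := {A | (∀ x y, lorentz (A x) (A y) = lorentz x y) ∧ ∀ x ∈ futureCone, A x ∈ futureCone}
  one_mem' := ⟨fun _ _ => rfl, fun _ hx => hx⟩
  mul_mem' {A B} hA hB := by
    refine ⟨fun x y => ?_, fun x hx => ?_⟩
    · rw [LinearEquiv.mul_apply, LinearEquiv.mul_apply, hA.1, hB.1]
    · rw [LinearEquiv.mul_apply]; exact hA.2 _ (hB.2 _ hx)

/-- The rotation by the angle `θ` about the time axis. -/
def rotation (θ : ℝ) : Minkowski ≃ₗ[ℝ] Minkowski where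
  toFun x := (cos θ * x.1 - sin θ * x.2.1, sin θ * x.1 + cos θ * x.2.1, x.2.2)
  invFun x := (cos θ * x.1 + sin θ * x.2.1, cos θ * x.2.1 - sin θ * x.1, x.2.2)
  map_add' x y := by
    ext <;> simp only [Prod.fst_add, Prod.snd_add, Prod.mk_add_mk] <;> ring
  map_smul' a x := by
    ext <;>
      simp only [Prod.smul_fst, Prod.smul_snd, Prod.smul_mk, smul_eq_mul, RingHom.id_apply] <;> ring
  left_inv x := by
    ext <;> simp only
    · linear_combination x.1 * sin_sq_add_cos_sq θ
    · linear_combination x.2.1 * sin_sq_add_cos_sq θ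
  right_inv x := by
    ext <;> simp only
    · linear_combination x.1 * sin_sq_add_cos_sq θ
    · linear_combination x.2.1 * sin_sq_add_cos_sq θ

/-- The translation by hyperbolic distance `η` along the first coordinate axis. -/
def boost (η : ℝ) : Minkowski ≃ₗ[ℝ] Minkowski where
  toFun x := (cosh η * x.1 + sinh η * x.2.2, x.2.1, sinh η * x.1 + cosh η * x.2.2)
  invFun x := (cosh η * x.1 - sinh η * x.2.2, x.2.1, cosh η * x.2.2 - sinh η * x.1)
  map_add' x y := by
    ext <;> simp only [Prod.fst_add, Prod.snd_add, Prod.mk_add_mk] <;> ring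
  map_smul' a x := by
    ext <;>
      simp only [Prod.smul_fst, Prod.smul_snd, Prod.smul_mk, smul_eq_mul, RingHom.id_apply] <;> ring
  left_inv x := by
    ext <;> simp only
    · linear_combination x.1 * cosh_sq_sub_sinh_sq η
    · linear_combination x.2.2 * cosh_sq_sub_sinh_sq η
  right_inv x := by
    ext <;> simp only
    · linear_combination x.1 * cosh_sq_sub_sinh_sq η
    · linear_combination x.2.2 * cosh_sq_sub_sinh_sq η

theorem rotation_apply (θ : ℝ) (x : Minkowski) : rotation θ x =
    (cos θ * x.1 - sin θ * x.2.1, sin θ * x.1 + cos θ * x.2.1, x.2.2) := rfl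

theorem boost_apply (η : ℝ) (x : Minkowski) : boost η x =
    (cosh η * x.1 + sinh η * x.2.2, x.2.1, sinh η * x.1 + cosh η * x.2.2) := rfl

theorem rotation_zero : rotation 0 = 1 := by
  ext x <;> simp [rotation_apply]

theorem rotation_mul_rotation (a b : ℝ) : rotation a * rotation b = rotation (a + b) := by
  ext x <;> simp only [LinearEquiv.mul_apply, rotation_apply, cos_add, sin_add] <;> ring

theorem rotation_add_int_mul_two_pi (a : ℝ) (n : ℤ) :
    rotation (a + n * (2 * π)) = rotation a := by
  ext x <;> simp [rotation_apply, cos_add_int_mul_two_pi, sin_add_int_mul_two_pi]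

theorem rotation_two_pi : rotation (2 * π) = 1 := by
  simpa [rotation_zero] using rotation_add_int_mul_two_pi 0 1

theorem rotation_neg (a : ℝ) : rotation (-a) = (rotation a)⁻¹ :=
  eq_inv_of_mul_eq_one_left (by rw [rotation_mul_rotation, neg_add_cancel, rotation_zero])

theorem rotation_pow (a : ℝ) (n : ℕ) : rotation a ^ n = rotation (n * a) := by
  induction n with
  | zero => simp [rotation_zero]
  | succ n ih =>
    rw [pow_succ, ih, rotation_mul_rotation]
    congr 1
    push_cast
    ring

theorem boost_mul_rotation_pi_mul_boost (η : ℝ) :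
    boost η * rotation π * boost η = rotation π := by
  refine LinearEquiv.ext fun x => ?_
  ext <;> simp only [LinearEquiv.mul_apply, rotation_apply, boost_apply, cos_pi, sin_pi]
  · linear_combination -x.1 * cosh_sq_sub_sinh_sq η
  · ring
  · linear_combination x.2.2 * cosh_sq_sub_sinh_sq η

theorem rotation_mem_orthochronous (θ : ℝ) : rotation θ ∈ orthochronous := by
  refine ⟨fun x y => ?_, fun x hx => ⟨hx.1, ?_⟩⟩
  · simp only [lorentz_apply, rotation_apply]
    linear_combination (x.1 * y.1 + x.2.1 * y.2.1) * sin_sq_add_cos_sq θ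
  · refine lt_of_eq_of_lt ?_ hx.2
    simp only [rotation_apply]
    linear_combination (x.1 ^ 2 + x.2.1 ^ 2) * sin_sq_add_cos_sq θ

theorem boost_mem_orthochronous (η : ℝ) : boost η ∈ orthochronous := by
  have h_form (x y : Minkowski) : lorentz (boost η x) (boost η y) = lorentz x y := by
    simp only [lorentz_apply, boost_apply]
    linear_combination (x.1 * y.1 - x.2.2 * y.2.2) * cosh_sq_sub_sinh_sq η
  refine ⟨h_form, fun x hx => ⟨?_, ?_⟩⟩
  · have hx1 : |x.1| < x.2.2 := abs_lt_of_sq_lt_sq (by nlinarith [hx.2, sq_nonneg x.2.1]) hx.1.le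
    have h_sinh : |sinh η| < cosh η :=
      abs_lt_of_sq_lt_sq (by linarith [cosh_sq_sub_sinh_sq η]) (cosh_pos η).le
    have h_mul : |sinh η * x.1| < cosh η * x.2.2 := by
      rw [abs_mul]
      exact mul_lt_mul'' h_sinh hx1 (abs_nonneg _) (abs_nonneg _)
    simp only [boost_apply]
    linarith [neg_abs_le (sinh η * x.1)]
  · have h := h_form x x
    simp only [lorentz_apply] at h
    linarith [hx.2]

/-- Reversed Cauchy–Schwarz. -/
theorem lorentz_nonpos_of_causal {y v x : Minkowski} (hy : lorentz y y ≤ 0)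
    (hv : v ∈ futureCone) (hyv : lorentz y v < 0) (hx : x ∈ futureCone) : lorentz y x ≤ 0 := by
  have key {z : Minkowski} (hz : z ∈ futureCone) :
      |y.1 * z.1 + y.2.1 * z.2.1| ≤ |y.2.2| * z.2.2 := by
    rw [lorentz_apply] at hy
    refine abs_le_of_sq_le_sq ?_ (mul_nonneg (abs_nonneg _) hz.1.le)
    calc (y.1 * z.1 + y.2.1 * z.2.1) ^ 2
        ≤ (y.1 ^ 2 + y.2.1 ^ 2) * (z.1 ^ 2 + z.2.1 ^ 2) := by
          nlinarith [sq_nonneg (y.1 * z.2.1 - y.2.1 * z.1)]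
      _ ≤ y.2.2 ^ 2 * z.2.2 ^ 2 :=
          mul_le_mul (by linarith) hz.2.le (by positivity) (by positivity)
      _ = (|y.2.2| * z.2.2) ^ 2 := by rw [mul_pow, sq_abs]
  have h_time : 0 ≤ y.2.2 := by
    by_contra! h
    have hk := neg_le_of_abs_le (key hv)
    rw [abs_of_neg h] at hk
    rw [lorentz_apply] at hyv
    linarith
  have hk := le_of_abs_le (key hx)
  rw [abs_of_nonneg h_time] at hk
  rw [lorentz_apply]
  linarith

/-- Two disjoint or tangent geodesics with compatible orientations bound nested half-planes. -/
theorem lorentz_pos_of_nested {m n v x : Minkowski} (hm : lorentz m m = 1) (hn : lorentz n n = 1)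
    (hmn : 1 ≤ lorentz n m) (hv : v ∈ futureCone) (hmv : lorentz m v ≤ 0) (hnv : 0 < lorentz n v)
    (hx : x ∈ futureCone) (hmx : 0 < lorentz m x) : 0 < lorentz n x := by
  have h_comm : lorentz m n = lorentz n m := by simp only [lorentz_apply]; ring
  have h := lorentz_nonpos_of_causal (y := m - n) (v := v)
    (by simp only [map_sub, LinearMap.sub_apply]; linarith) hv
    (by simp only [map_sub, LinearMap.sub_apply]; linarith) hx
  simp only [map_sub, LinearMap.sub_apply] at h
  linarith

end Minkowski

section Cotangent

open Real

theorem cot_le_cot_of_le {a b : ℝ} (ha : 0 < a) (hab : a ≤ b) (hb : b < π) : cot b ≤ cot a := by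
  have h_sin : 0 ≤ sin (b - a) := sin_nonneg_of_nonneg_of_le_pi (by linarith) (by linarith)
  rw [sin_sub] at h_sin
  rw [cot_eq_cos_div_sin, cot_eq_cos_div_sin, div_le_div_iff₀
    (sin_pos_of_pos_of_lt_pi (by linarith) hb) (sin_pos_of_pos_of_lt_pi ha (by linarith))]
  linarith

theorem cot_pi_sub (x : ℝ) : cot (π - x) = -cot x := by
  rw [cot_eq_cos_div_sin, cot_eq_cos_div_sin, cos_pi_sub, sin_pi_sub, neg_div]

theorem cot_pi_div_two_sub (x : ℝ) : cot (π / 2 - x) = (cot x)⁻¹ := by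
  rw [cot_eq_cos_div_sin, cot_eq_cos_div_sin, cos_pi_div_two_sub, sin_pi_div_two_sub, inv_div]

theorem cot_two_mul (x : ℝ) : cot (2 * x) = (cot x - (cot x)⁻¹) / 2 := by
  rw [cot_inv_eq_tan, tan_eq_sin_div_cos, cot_eq_cos_div_sin, cot_eq_cos_div_sin, cos_two_mul',
    sin_two_mul]
  rcases eq_or_ne (sin x) 0 with hs | hs
  · simp [hs]
  rcases eq_or_ne (cos x) 0 with hc | hc
  · simp [hc]
  field_simp

theorem cot_three_mul_le {x : ℝ} (hx : 0 < x) (hx' : 3 * x < π) : cot (3 * x) ≤ cot x / 3 := by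
  have hs := sin_pos_of_pos_of_lt_pi hx (by linarith)
  have hc := cos_pos_of_mem_Ioo (x := x) ⟨by linarith, by linarith⟩
  have hs3 := sin_pos_of_pos_of_lt_pi (by linarith) hx'
  have h_diff : 0 ≤ 8 * cos x * sin x ^ 3 := by positivity
  rw [cot_eq_cos_div_sin, cot_eq_cos_div_sin, div_div, div_le_div_iff₀ hs3 (by linarith),
    cos_three_mul, sin_three_mul]
  linear_combination h_diff + 12 * cos x * sin x * sin_sq_add_cos_sq x

end Cotangent

section Tiling

open Real

/-- Half the angle `2π / 4g` between consecutive half-edges in the tiling of the hyperbolic plane by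
regular `4g`-gons, `4g` of them around each vertex. -/
def halfAngle (g : ℕ) : ℝ := π / (4 * g)

/-- Half the edge length of the tiling by regular `4g`-gons with angles `2 * halfAngle g`: in the
right triangle formed by the centre of a polygon, the midpoint of a side and an endpoint of this
side, both acute angles are `halfAngle g`. -/
def halfEdge (g : ℕ) : ℝ := arcosh (cot (halfAngle g))

variable {g : ℕ} (hg : 2 ≤ g)
include hg

theorem four_mul_mul_halfAngle : 4 * g * halfAngle g = π := by
  have : (g : ℝ) ≠ 0 := by exact_mod_cast (by omega : g ≠ 0)
  rw [halfAngle]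
  field_simp

theorem two_mul_two_mul_halfAngle : 2 * ((2 * g : ℕ) * halfAngle g) = π := by
  rw [← four_mul_mul_halfAngle hg]
  push_cast
  ring

theorem halfAngle_pos : 0 < halfAngle g :=
  div_pos pi_pos (by exact_mod_cast (by omega : 0 < 4 * g))

theorem natCast_mul_halfAngle_lt_pi {j : ℕ} (hj : j < 4 * g) : j * halfAngle g < π := by
  rw [← four_mul_mul_halfAngle hg]
  exact mul_lt_mul_of_pos_right (by exact_mod_cast hj) (halfAngle_pos hg)

theorem sin_natCast_mul_halfAngle_pos {j : ℕ} (hj0 : 0 < j) (hj : j < 4 * g) :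
    0 < sin (j * halfAngle g) :=
  sin_pos_of_pos_of_lt_pi (mul_pos (by exact_mod_cast hj0) (halfAngle_pos hg))
    (natCast_mul_halfAngle_lt_pi hg hj)

theorem cot_natCast_mul_halfAngle_le {i j : ℕ} (hi : 0 < i) (hij : i ≤ j) (hj : j < 4 * g) :
    cot (j * halfAngle g) ≤ cot (i * halfAngle g) :=
  cot_le_cot_of_le (mul_pos (by exact_mod_cast hi) (halfAngle_pos hg))
    (mul_le_mul_of_nonneg_right (by exact_mod_cast hij) (halfAngle_pos hg).le)
    (natCast_mul_halfAngle_lt_pi hg hj)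

theorem neg_cot_natCast_mul_halfAngle_le {i j : ℕ} (hi : 0 < i) (hj : 0 < j)
    (hij : i + j ≤ 4 * g) : -cot (i * halfAngle g) ≤ cot (j * halfAngle g) := by
  have h_refl : cot ((4 * g - i : ℕ) * halfAngle g) = -cot (i * halfAngle g) := by
    rw [← cot_pi_sub, ← four_mul_mul_halfAngle hg, Nat.cast_sub (by omega)]
    congr 1
    push_cast
    ring
  rw [← h_refl]
  exact cot_natCast_mul_halfAngle_le hg hj (by omega) (by omega)

theorem inv_cot_natCast_mul_halfAngle {j : ℕ} (hj : j ≤ 2 * g) :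
    cot ((2 * g - j : ℕ) * halfAngle g) = (cot (j * halfAngle g))⁻¹ := by
  rw [← cot_pi_div_two_sub, ← four_mul_mul_halfAngle hg, Nat.cast_sub hj]
  congr 1
  push_cast
  ring

theorem one_le_cot_two_mul_halfAngle : 1 ≤ cot (2 * halfAngle g) := by
  have h := cot_natCast_mul_halfAngle_le hg (i := 2) (j := g) two_pos hg (by omega)
  have h_quarter : (g : ℝ) * halfAngle g = π / 4 := by linarith [four_mul_mul_halfAngle hg]
  rwa [h_quarter, ← tan_inv_eq_cot, tan_pi_div_four, inv_one] at h

theorem two_lt_cot_halfAngle : 2 < cot (halfAngle g) := by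
  have h_two := one_le_cot_two_mul_halfAngle hg
  have h_le := cot_natCast_mul_halfAngle_le hg (i := 1) (j := 2) one_pos one_le_two (by omega)
  rw [Nat.cast_one, one_mul, Nat.cast_two] at h_le
  have h_inv : 0 < (cot (halfAngle g))⁻¹ := inv_pos.mpr (by linarith)
  rw [cot_two_mul] at h_two
  linarith

theorem cosh_halfEdge : cosh (halfEdge g) = cot (halfAngle g) :=
  cosh_arcosh (by linarith [two_lt_cot_halfAngle hg])

theorem sinh_halfEdge_sq : sinh (halfEdge g) ^ 2 = cot (halfAngle g) ^ 2 - 1 := by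
  rw [sinh_sq, cosh_halfEdge hg]

theorem sinh_halfEdge_pos : 0 < sinh (halfEdge g) :=
  sinh_pos_iff.mpr (arcosh_pos (by linarith [two_lt_cot_halfAngle hg]))

end Tiling

section TurnPolynomial

open Real

/-- Up to a positive factor, the excess over `1` of the Lorentzian product of two walls joined by
a path with `k` turns `0` and a final turn `t`; here `C`, `c` and `w` are the cotangents of `h`,
`k * h` and `(t + 1) * h`, where `h = halfAngle g`. -/
def turnPoly (C c w : ℝ) : ℝ :=
  C ^ 2 * (c ^ 2 - 1) - 2 * C ^ 2 * w * c + 2 * (C ^ 2 - 1) * C * c - c ^ 2 * (1 + w ^ 2)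

theorem two_mul_sin_sq_mul_turnPoly {C p u : ℝ} (hp : sin p ≠ 0) (hu : sin u ≠ 0) :
    2 * (sin p * sin u) ^ 2 * turnPoly C (cot p) (cot u) =
      cos (2 * p) * (C ^ 2 - 1 - C ^ 2 * cos (2 * u)) +
        sin (2 * p) * ((C ^ 2 - 1) * C * (1 - cos (2 * u)) - C ^ 2 * sin (2 * u)) - 1 := by
  obtain ⟨c, hc⟩ : ∃ c, cos p = c * sin p := ⟨cos p / sin p, (div_mul_cancel₀ _ hp).symm⟩
  obtain ⟨w, hw⟩ : ∃ w, cos u = w * sin u := ⟨cos u / sin u, (div_mul_cancel₀ _ hu).symm⟩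
  have hp1 : sin p ^ 2 * (1 + c ^ 2) = 1 := by
    linear_combination sin_sq_add_cos_sq p - (cos p + c * sin p) * hc
  have hu1 : sin u ^ 2 * (1 + w ^ 2) = 1 := by
    linear_combination sin_sq_add_cos_sq u - (cos u + w * sin u) * hw
  rw [cot_eq_cos_div_sin, cot_eq_cos_div_sin, cos_two_mul', cos_two_mul', sin_two_mul, sin_two_mul,
    hc, hw, mul_div_cancel_right₀ _ hp, mul_div_cancel_right₀ _ hu, turnPoly]
  linear_combination -hp1 +
    sin p ^ 2 * ((C ^ 2 - 1) * (c ^ 2 - 1) + 2 * c * (C ^ 2 - 1) * C - (1 + c ^ 2)) * hu1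

theorem turnPoly_nonneg_of_le {C c w w' : ℝ} (hc : 0 < c) (hcC : c ≤ C) (hCw : -C ≤ w)
    (hww' : w ≤ w') (h : 0 ≤ turnPoly C c w') : 0 ≤ turnPoly C c w := by
  have h_diff : turnPoly C c w = turnPoly C c w' + (w' - w) * c * (2 * C ^ 2 + c * (w + w')) := by
    simp only [turnPoly]
    ring
  have h_factor : 0 ≤ 2 * C ^ 2 + c * (w + w') := by nlinarith
  rw [h_diff]
  exact add_nonneg h (mul_nonneg (mul_nonneg (sub_nonneg.mpr hww') hc.le) h_factor)

theorem turnPoly_cot_two_nonneg {C c : ℝ} (hC : 1 < C) (hc : ((C - C⁻¹) / 2)⁻¹ ≤ c) :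
    0 ≤ turnPoly C c ((C - C⁻¹) / 2) := by
  have hC0 : 0 < C := by linarith
  have h_mul : 2 * C ≤ (C ^ 2 - 1) * c := by
    rw [inv_le_iff_one_le_mul₀ (by linarith [inv_lt_one_of_one_lt₀ hC])] at hc
    have := mul_le_mul_of_nonneg_left hc (by positivity : 0 ≤ 2 * C)
    field_simp at this
    linarith
  have h_eq : turnPoly C c ((C - C⁻¹) / 2) =
      c ^ 2 * (C ^ 2 - ((C + C⁻¹) / 2) ^ 2) + C * ((C ^ 2 - 1) * c - C) := by
    rw [turnPoly]
    field_simp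
    ring
  have h_sq : ((C + C⁻¹) / 2) ^ 2 ≤ C ^ 2 := by
    have := inv_lt_one_of_one_lt₀ hC
    gcongr
    linarith
  rw [h_eq]
  exact add_nonneg (mul_nonneg (sq_nonneg c) (sub_nonneg.mpr h_sq))
    (mul_nonneg hC0.le (by linarith))

theorem turnPoly_inv_div_three_nonneg {C : ℝ} (hC : 5 ≤ C ^ 2) (hC0 : 0 < C) :
    0 ≤ turnPoly C C⁻¹ (C / 3) := by
  have h_eq : turnPoly C C⁻¹ (C / 3) = (3 * C ^ 4 - 10 * C ^ 2 - 9) / (9 * C ^ 2) := by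
    rw [turnPoly]
    field_simp
    ring
  rw [h_eq]
  exact div_nonneg (by nlinarith) (by positivity)

end TurnPolynomial

section Step

open Real

/-- The unit vector whose wall is the perpendicular bisector of an edge, in the frame at the
midpoint of this edge whose first axis points along the edge. -/
def unitX : Minkowski := (1, 0, 0)

/-- The terminal vertex of an edge, in the frame at its midpoint. -/
def edgeHead (g : ℕ) : Minkowski := boost (halfEdge g) (0, 0, 1)

/-- The change of frame from the midpoint of an edge to the midpoint of the edge that leaves its
terminal vertex after skipping `t` half-edges. -/
def step (g t : ℕ) : Minkowski ≃ₗ[ℝ] Minkowski :=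
  boost (halfEdge g) * rotation (π + 2 * halfAngle g * (t + 1)) * boost (halfEdge g)

/-- The change of frame from the midpoint of an edge to the centre of the polygon on its left. -/
def toCentre (g : ℕ) : Minkowski ≃ₗ[ℝ] Minkowski :=
  rotation (π / 2) * boost (halfEdge g) * rotation (-(π / 2))

theorem lorentz_unitX (x : Minkowski) : lorentz unitX x = x.1 := by
  simp [lorentz_apply, unitX]

theorem step_mem_orthochronous (g t : ℕ) : step g t ∈ orthochronous :=
  mul_mem (mul_mem (boost_mem_orthochronous _) (rotation_mem_orthochronous _))
    (boost_mem_orthochronous _)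

theorem edgeHead_mem_futureCone (g : ℕ) : edgeHead g ∈ futureCone :=
  (boost_mem_orthochronous _).2 _ (by simp [futureCone])

theorem edgeHead_fst (g : ℕ) : (edgeHead g).1 = sinh (halfEdge g) := by
  simp [edgeHead, boost_apply]

theorem lorentz_step_unitX_edgeHead (g t : ℕ) :
    lorentz (step g t unitX) (edgeHead g) = -sinh (halfEdge g) := by
  rw [step, edgeHead, LinearEquiv.mul_apply, LinearEquiv.mul_apply,
    (boost_mem_orthochronous _).1]
  simp [lorentz_apply, rotation_apply, boost_apply, unitX]

theorem step_unitX (g t : ℕ) : step g t unitX =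
    (sinh (halfEdge g) ^ 2 - cosh (halfEdge g) ^ 2 * cos (2 * ((t + 1 : ℕ) * halfAngle g)),
      -cosh (halfEdge g) * sin (2 * ((t + 1 : ℕ) * halfAngle g)),
      sinh (halfEdge g) * cosh (halfEdge g) * (1 - cos (2 * ((t + 1 : ℕ) * halfAngle g)))) := by
  have h_angle : π + 2 * halfAngle g * (t + 1) = 2 * ((t + 1 : ℕ) * halfAngle g) + π := by
    push_cast
    ring
  rw [step, h_angle]
  ext <;> simp only [LinearEquiv.mul_apply, boost_apply, rotation_apply, unitX, cos_add, sin_add,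
    cos_pi, sin_pi] <;> ring

theorem step_one (g : ℕ) : step g 1 = step g 0 * rotation π * step g 0 := by
  have h_angle : π + 2 * halfAngle g * ((1 : ℕ) + 1) =
      (π + 2 * halfAngle g * ((0 : ℕ) + 1)) + (-1 : ℤ) * (2 * π) + π +
        (π + 2 * halfAngle g * ((0 : ℕ) + 1)) := by
    push_cast
    ring
  have h_pi := boost_mul_rotation_pi_mul_boost (halfEdge g)
  simp only [step, h_angle]
  rw [← rotation_mul_rotation, ← rotation_mul_rotation, rotation_add_int_mul_two_pi]
  conv_lhs => rw [← h_pi]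
  group

theorem toCentre_apply (g : ℕ) (x : Minkowski) : toCentre g x =
    (x.1, cosh (halfEdge g) * x.2.1 + sinh (halfEdge g) * x.2.2,
      sinh (halfEdge g) * x.2.1 + cosh (halfEdge g) * x.2.2) := by
  simp [toCentre, LinearEquiv.mul_apply, rotation_apply, boost_apply]

variable {g : ℕ} (hg : 2 ≤ g)
include hg

/-- Stepping with turn `0` walks around a polygon, hence is a rotation about its centre. -/
theorem semiconjBy_toCentre_step_zero :
    SemiconjBy (toCentre g) (step g 0) (rotation (-(2 * halfAngle g))) := by
  have h_cot : cot (halfAngle g) * sin (halfAngle g) = cos (halfAngle g) := by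
    rw [cot_eq_cos_div_sin, div_mul_cancel₀]
    simpa using (sin_natCast_mul_halfAngle_pos hg one_pos (by omega)).ne'
  have h_sin : cosh (halfEdge g) * sin (2 * halfAngle g) = 1 + cos (2 * halfAngle g) := by
    rw [sin_two_mul, cos_two_mul, cosh_halfEdge hg]
    linear_combination 2 * cos (halfAngle g) * h_cot
  have h_cos : cosh (halfEdge g) * (1 - cos (2 * halfAngle g)) = sin (2 * halfAngle g) := by
    rw [sin_two_mul, cos_two_mul, cosh_halfEdge hg]
    linear_combination
      2 * sin (halfAngle g) * h_cot - 2 * cot (halfAngle g) * sin_sq_add_cos_sq (halfAngle g)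
  have h_cosh := cosh_sq_sub_sinh_sq (halfEdge g)
  refine LinearEquiv.ext fun x => ?_
  simp only [step, LinearEquiv.mul_apply, toCentre_apply, boost_apply, rotation_apply,
    Nat.cast_zero, zero_add, mul_one, cos_add, sin_add, cos_pi, sin_pi, cos_neg, sin_neg]
  generalize cosh (halfEdge g) = C at *
  generalize sinh (halfEdge g) = S at *
  generalize cos (2 * halfAngle g) = c at *
  generalize sin (2 * halfAngle g) = s at *
  ext
  · simp only
    linear_combination x.1 * (C * h_cos + h_sin - h_cosh) + x.2.2 * S * h_cos
  · simp only
    linear_combination x.1 * (S ^ 2 * h_cos - s * h_cosh) +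
      x.2.1 * (C * h_sin + h_cos - s * h_cosh) + x.2.2 * S * (C * h_cos + c * h_cosh)
  · simp only
    linear_combination x.1 * S * C * h_cos + x.2.1 * S * h_sin +
      x.2.2 * (S ^ 2 * h_cos + C * h_cosh)

theorem toCentre_step_zero_pow (k : ℕ) (x : Minkowski) :
    toCentre g ((step g 0 ^ k) x) = rotation (-(2 * (k * halfAngle g))) (toCentre g x) := by
  have h_pow : rotation (-(2 * halfAngle g)) ^ k = rotation (-(2 * (k * halfAngle g))) := by
    rw [rotation_pow]
    congr 1
    ring
  rw [← h_pow, ← LinearEquiv.mul_apply, ← LinearEquiv.mul_apply,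
    (semiconjBy_toCentre_step_zero hg).pow_right k]

theorem step_zero_pow_fst (k : ℕ) (x : Minkowski) : ((step g 0 ^ k) x).1 =
    cos (2 * (k * halfAngle g)) * x.1 + sin (2 * (k * halfAngle g)) *
      (cosh (halfEdge g) * x.2.1 + sinh (halfEdge g) * x.2.2) := by
  have h := congrArg Prod.fst (toCentre_step_zero_pow hg k x)
  simpa [toCentre_apply, rotation_apply] using h

theorem step_zero_pow_half_unitX : (step g 0 ^ (2 * g)) unitX = -unitX := by
  refine (toCentre g).injective ?_
  rw [toCentre_step_zero_pow hg, two_mul_two_mul_halfAngle hg]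
  simp [toCentre_apply, rotation_apply, unitX]

theorem step_zero_pow_full : step g 0 ^ (4 * g) = 1 := by
  have h_angle : 2 * ((4 * g : ℕ) * halfAngle g) = 2 * π := by
    rw [← four_mul_mul_halfAngle hg]
    push_cast
    ring
  refine LinearEquiv.ext fun x => (toCentre g).injective ?_
  rw [toCentre_step_zero_pow hg, h_angle, rotation_neg, rotation_two_pi, inv_one]
  rfl

theorem step_zero_pow_mul_step_one_fst (x : Minkowski) :
    ((step g 0 ^ (2 * g - 1)) (step g 1 x)).1 = (step g 0 x).1 := by
  have h_mul : step g 0 ^ (2 * g - 1) * step g 1 =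
      step g 0 ^ (2 * g) * (rotation π * step g 0) := by
    rw [step_one, mul_assoc, ← mul_assoc (step g 0 ^ _), pow_sub_one_mul (by omega)]
  rw [← LinearEquiv.mul_apply, h_mul, LinearEquiv.mul_apply, step_zero_pow_fst hg,
    two_mul_two_mul_halfAngle hg]
  simp [LinearEquiv.mul_apply, rotation_apply]

theorem step_zero_pow_edgeHead_fst_pos {k : ℕ} (hk : k < 2 * g) :
    0 < ((step g 0 ^ k) (edgeHead g)).1 := by
  have h_sin := sin_natCast_mul_halfAngle_pos hg one_pos (by omega)
  have h_sin_add : 0 < sin ((2 * k + 1 : ℕ) * halfAngle g) :=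
    sin_natCast_mul_halfAngle_pos hg (by omega) (by omega)
  rw [Nat.cast_one, one_mul] at h_sin
  have h_eq : sin (halfAngle g) * ((step g 0 ^ k) (edgeHead g)).1 =
      sinh (halfEdge g) * sin ((2 * k + 1 : ℕ) * halfAngle g) := by
    have h_add : ((2 * k + 1 : ℕ) : ℝ) * halfAngle g = 2 * (k * halfAngle g) + halfAngle g := by
      push_cast
      ring
    rw [step_zero_pow_fst hg, edgeHead, boost_apply, h_add, sin_add]
    simp only [mul_zero, mul_one, zero_add]
    rw [cosh_halfEdge hg, cot_eq_cos_div_sin]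
    field_simp
    ring
  exact pos_of_mul_pos_right (h_eq ▸ mul_pos (sinh_halfEdge_pos hg) h_sin_add) h_sin.le

theorem five_le_cot_halfAngle_sq : 5 ≤ cot (halfAngle g) ^ 2 := by
  have h_two := one_le_cot_two_mul_halfAngle hg
  have h_gt := two_lt_cot_halfAngle hg
  rw [cot_two_mul] at h_two
  have := mul_le_mul_of_nonneg_left h_two (by positivity : 0 ≤ 2 * cot (halfAngle g))
  field_simp at this
  linarith

theorem turnPoly_cot_nonneg {k t : ℕ} (hk0 : 0 < k) (hk : k < 2 * g) (ht : 1 ≤ t)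
    (ht' : t + 1 < 4 * g) (hkt : k + 1 = 2 * g → 2 ≤ t) :
    0 ≤ turnPoly (cot (halfAngle g)) (cot (k * halfAngle g)) (cot ((t + 1 : ℕ) * halfAngle g)) := by
  have h_gt := two_lt_cot_halfAngle hg
  have hc_le : cot (k * halfAngle g) ≤ cot (halfAngle g) := by
    simpa using cot_natCast_mul_halfAngle_le hg one_pos hk0 (by omega)
  have hw_ge := neg_cot_natCast_mul_halfAngle_le hg (i := 1) one_pos (Nat.succ_pos t) (by omega)
  rw [Nat.cast_one, one_mul] at hw_ge
  by_cases hk' : k + 1 = 2 * g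
  · have hc : cot (k * halfAngle g) = (cot (halfAngle g))⁻¹ := by
      have := inv_cot_natCast_mul_halfAngle hg (j := 1) (by omega)
      rwa [Nat.cast_one, one_mul, ← hk', Nat.add_sub_cancel] at this
    have hw_le : cot ((t + 1 : ℕ) * halfAngle g) ≤ cot (halfAngle g) / 3 := by
      have h_lt := natCast_mul_halfAngle_lt_pi hg (j := 3) (by omega)
      refine (cot_natCast_mul_halfAngle_le hg (i := 3) (by omega) (by have := hkt hk'; omega)
        ht').trans ?_
      exact_mod_cast cot_three_mul_le (halfAngle_pos hg) (by exact_mod_cast h_lt)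
    refine turnPoly_nonneg_of_le ?_ hc_le hw_ge hw_le ?_
    · rw [hc]
      positivity
    · rw [hc]
      exact turnPoly_inv_div_three_nonneg (five_le_cot_halfAngle_sq hg) (by linarith)
  · have hw_le : cot ((t + 1 : ℕ) * halfAngle g) ≤
        (cot (halfAngle g) - (cot (halfAngle g))⁻¹) / 2 := by
      rw [← cot_two_mul]
      exact_mod_cast cot_natCast_mul_halfAngle_le hg (i := 2) two_pos (by omega) ht'
    have hc_ge : ((cot (halfAngle g) - (cot (halfAngle g))⁻¹) / 2)⁻¹ ≤ cot (k * halfAngle g) := by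
      rw [← cot_two_mul, ← Nat.cast_two, ← inv_cot_natCast_mul_halfAngle hg (by omega)]
      exact cot_natCast_mul_halfAngle_le hg hk0 (by omega) (by omega)
    refine turnPoly_nonneg_of_le (lt_of_lt_of_le ?_ hc_ge) hc_le hw_ge hw_le
      (turnPoly_cot_two_nonneg (by linarith) hc_ge)
    rw [inv_pos, ← cot_two_mul]
    linarith [one_le_cot_two_mul_halfAngle hg]

theorem one_le_step_unitX_fst {t : ℕ} (ht : 1 ≤ t) (ht' : t + 2 < 4 * g) :
    1 ≤ (step g t unitX).1 := by
  have h_gt := two_lt_cot_halfAngle hg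
  have h_sin := sin_natCast_mul_halfAngle_pos hg (Nat.succ_pos t) (by omega)
  have h_le := cot_natCast_mul_halfAngle_le hg (i := 2) (j := t + 1) two_pos (by omega) (by omega)
  have h_ge := neg_cot_natCast_mul_halfAngle_le hg (i := 2) two_pos (Nat.succ_pos t) (by omega)
  rw [Nat.cast_two, cot_two_mul] at h_le h_ge
  have h_inv := inv_lt_one_of_one_lt₀ (by linarith : 1 < cot (halfAngle g))
  have h_csc : 1 + cot ((t + 1 : ℕ) * halfAngle g) ^ 2 ≤ cot (halfAngle g) ^ 2 :=
    calc 1 + cot ((t + 1 : ℕ) * halfAngle g) ^ 2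
        ≤ 1 + ((cot (halfAngle g) - (cot (halfAngle g))⁻¹) / 2) ^ 2 := by
          gcongr 1 + ?_
          exact sq_le_sq' h_ge h_le
      _ = ((cot (halfAngle g) + (cot (halfAngle g))⁻¹) / 2) ^ 2 := by
          field_simp
          ring
      _ ≤ cot (halfAngle g) ^ 2 := by
          gcongr
          linarith
  have h_mul := mul_le_mul_of_nonneg_right h_csc (sq_nonneg (sin ((t + 1 : ℕ) * halfAngle g)))
  have h_one : (1 + cot ((t + 1 : ℕ) * halfAngle g) ^ 2) * sin ((t + 1 : ℕ) * halfAngle g) ^ 2 =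
      1 := by
    rw [cot_eq_cos_div_sin]
    field_simp
    exact sin_sq_add_cos_sq _
  rw [step_unitX]
  simp only [cosh_halfEdge hg, sinh_halfEdge_sq hg, cos_two_mul']
  linear_combination 2 * h_mul - 2 * h_one + cot (halfAngle g) ^ 2 *
    sin_sq_add_cos_sq ((t + 1 : ℕ) * halfAngle g)

/-- The walls at both ends of a path around a polygon with a final turn `t` do not cross. -/
theorem one_le_step_zero_pow_step_unitX_fst {k t : ℕ} (hk : k < 2 * g) (ht : 1 ≤ t)
    (ht' : t + 1 < 4 * g) (hkt0 : k = 0 → t + 2 < 4 * g) (hkt : k + 1 = 2 * g → 2 ≤ t) :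
    1 ≤ ((step g 0 ^ k) (step g t unitX)).1 := by
  rcases Nat.eq_zero_or_pos k with rfl | hk0
  · exact one_le_step_unitX_fst hg ht (hkt0 rfl)
  have h_poly := turnPoly_cot_nonneg hg hk0 hk ht ht' hkt
  have h_eq := two_mul_sin_sq_mul_turnPoly (C := cot (halfAngle g))
    (sin_natCast_mul_halfAngle_pos hg hk0 (by omega)).ne'
    (sin_natCast_mul_halfAngle_pos hg (Nat.succ_pos t) ht').ne'
  have h_nonneg := mul_nonneg (by positivity : 0 ≤ 2 * (sin (k * halfAngle g) *
    sin ((t + 1 : ℕ) * halfAngle g)) ^ 2) h_poly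
  rw [h_eq] at h_nonneg
  rw [step_zero_pow_fst hg, step_unitX]
  simp only [sinh_halfEdge_sq hg, cosh_halfEdge hg]
  have h_sq := sinh_halfEdge_sq hg
  linear_combination h_nonneg -
    sin (2 * (k * halfAngle g)) * cot (halfAngle g) *
      (1 - cos (2 * ((t + 1 : ℕ) * halfAngle g))) * h_sq

theorem step_zero_pow_step_fst_pos {k t : ℕ} (hk : k < 2 * g) (ht : 1 ≤ t) (ht' : t + 1 < 4 * g)
    (hkt0 : k = 0 → t + 2 < 4 * g) (hkt : k + 1 = 2 * g → 2 ≤ t) {x : Minkowski}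
    (hx : x ∈ futureCone) (hx1 : 0 < x.1) : 0 < ((step g 0 ^ k) (step g t x)).1 := by
  have hk_mem := pow_mem (step_mem_orthochronous g 0) k
  have ht_mem := step_mem_orthochronous g t
  have h_unit : lorentz unitX unitX = 1 := lorentz_unitX _
  rw [← lorentz_unitX]
  refine lorentz_pos_of_nested (m := (step g 0 ^ k) (step g t unitX))
    (v := (step g 0 ^ k) (edgeHead g)) ?_ h_unit ?_ (hk_mem.2 _ (edgeHead_mem_futureCone g)) ?_ ?_
    (hk_mem.2 _ (ht_mem.2 _ hx)) ?_
  · rw [hk_mem.1, ht_mem.1, h_unit]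
  · rw [lorentz_unitX]
    exact one_le_step_zero_pow_step_unitX_fst hg hk ht ht' hkt0 hkt
  · rw [hk_mem.1, lorentz_step_unitX_edgeHead]
    linarith [sinh_halfEdge_pos hg]
  · rw [lorentz_unitX]
    exact step_zero_pow_edgeHead_fst_pos hg hk
  · rwa [hk_mem.1, ht_mem.1, lorentz_unitX]

end Step

section TautTurns

open Real

/-- The isometry induced by a path with the given turns, from the frame at the midpoint of its first
edge to the frame at the midpoint of its last edge. -/
def path (g : ℕ) (ts : List ℕ) : Minkowski ≃ₗ[ℝ] Minkowski := (ts.map (step g)).prod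

/-- The reflection in the geodesic that carries the given edge. -/
def reflection : Minkowski ≃ₗ[ℝ] Minkowski :=
  (LinearEquiv.refl ℝ ℝ).prodCongr ((LinearEquiv.neg ℝ).prodCongr (LinearEquiv.refl ℝ ℝ))

/-- The number of half-edges skipped on the other side by a path that skips `t` half-edges. -/
def mirror (g t : ℕ) : ℕ := 4 * g - 2 - t

/-- The turn number `a` of a long block (`k = 0`) or of a long chain of `k + 1` blocks. -/
def longTurn (g k a : ℕ) : ℕ :=
  if 2 * g - 1 ∣ a ∧ 0 < a ∧ a < (2 * g - 1) * (k + 1) then 1 else 0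

/-- The list of turns of a long block of length `2g + 1` (`k = 0`) or of a long chain of `k + 1`
blocks. -/
def longTurns (g k : ℕ) : List ℕ := (List.range ((2 * g - 1) * (k + 1) + 1)).map (longTurn g k)

/-- A list of turns is taut if it describes a path that neither backtracks nor contains a long block
or a long chain on either side. -/
def IsTaut (g : ℕ) (ts : List ℕ) : Prop :=
  (∀ t ∈ ts, t + 1 < 4 * g) ∧
    ∀ k, ¬ longTurns g k <:+: ts ∧ ¬ (longTurns g k).map (mirror g) <:+: ts

theorem path_cons (g t : ℕ) (ts : List ℕ) : path g (t :: ts) = step g t * path g ts := by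
  simp [path]

theorem path_append (g : ℕ) (ts ts' : List ℕ) : path g (ts ++ ts') = path g ts * path g ts' := by
  simp [path]

theorem path_replicate (g k t : ℕ) : path g (List.replicate k t) = step g t ^ k := by
  simp [path]

theorem path_mem_orthochronous (g : ℕ) (ts : List ℕ) : path g ts ∈ orthochronous :=
  list_prod_mem fun _ h => by
    obtain ⟨t, -, rfl⟩ := List.mem_map.mp h
    exact step_mem_orthochronous g t

theorem reflection_apply (x : Minkowski) : reflection x = (x.1, -x.2.1, x.2.2) := rfl

theorem reflection_boost (η : ℝ) (x : Minkowski) :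
    reflection (boost η x) = boost η (reflection x) := by
  simp [reflection_apply, boost_apply]

theorem reflection_rotation (θ : ℝ) (x : Minkowski) :
    reflection (rotation θ x) = rotation (-θ) (reflection x) := by
  simp [reflection_apply, rotation_apply, add_comm]

theorem longTurn_zero_left (g a : ℕ) : longTurn g 0 a = 0 :=
  if_neg fun ⟨h_dvd, h_pos, h_lt⟩ =>
    h_lt.not_ge (by simpa using Nat.le_of_dvd h_pos h_dvd)

theorem longTurns_zero {g : ℕ} : longTurns g 0 = List.replicate (2 * g - 1 + 1) 0 := by
  refine List.eq_replicate_iff.mpr ⟨by simp [longTurns], fun b hb => ?_⟩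
  obtain ⟨a, -, rfl⟩ := List.mem_map.mp hb
  exact longTurn_zero_left g a

theorem longTurns_eq_cons (g k : ℕ) : longTurns g k =
    0 :: (List.range ((2 * g - 1) * (k + 1))).map fun a => longTurn g k (a + 1) := by
  rw [longTurns, List.range_succ_eq_map, List.map_cons, List.map_map]
  simp [longTurn, Function.comp_def]

theorem longTurn_le (g k a : ℕ) : longTurn g k a ≤ 1 := by
  rw [longTurn]
  split_ifs <;> omega

theorem mirror_mirror {g t : ℕ} (ht : t + 1 < 4 * g) : mirror g (mirror g t) = t := by
  simp only [mirror]
  omega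

theorem mirror_add_one_lt {g : ℕ} (hg : 0 < g) (t : ℕ) : mirror g t + 1 < 4 * g := by
  simp only [mirror]
  omega

theorem map_mirror_map_mirror {g : ℕ} {ts : List ℕ} (h : ∀ t ∈ ts, t + 1 < 4 * g) :
    (ts.map (mirror g)).map (mirror g) = ts := by
  rw [List.map_map]
  exact (List.map_congr_left fun t ht => mirror_mirror (h t ht)).trans (List.map_id _)

theorem IsTaut.of_infix {g : ℕ} {ts ts' : List ℕ} (h : IsTaut g ts) (hts : ts' <:+: ts) :
    IsTaut g ts' :=
  ⟨fun t ht => h.1 t (hts.subset ht), fun k =>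
    ⟨fun hk => (h.2 k).1 (hk.trans hts), fun hk => (h.2 k).2 (hk.trans hts)⟩⟩

theorem exists_eq_replicate_or_append {α : Type*} (a : α) (l : List α) :
    (∃ k, l = List.replicate k a) ∨
      ∃ k b l', b ≠ a ∧ l = List.replicate k a ++ b :: l' := by
  induction l with
  | nil => exact .inl ⟨0, rfl⟩
  | cons b l ih =>
    by_cases hb : b = a
    · subst hb
      rcases ih with ⟨k, rfl⟩ | ⟨k, c, l', hc, rfl⟩
      · exact .inl ⟨k + 1, rfl⟩
      · exact .inr ⟨k + 1, c, l', hc, rfl⟩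
    · exact .inr ⟨0, b, l, hb, rfl⟩

variable {g : ℕ} (hg : 2 ≤ g)
include hg

theorem longTurns_succ (k : ℕ) : longTurns g (k + 1) = List.replicate (2 * g - 1) 0 ++
    1 :: (List.range ((2 * g - 1) * (k + 1))).map fun a => longTurn g k (a + 1) := by
  have h_len : (2 * g - 1) * (k + 1 + 1) + 1 = 2 * g - 1 + ((2 * g - 1) * (k + 1) + 1) := by ring
  have h_zero : (List.range (2 * g - 1)).map (longTurn g (k + 1)) =
      List.replicate (2 * g - 1) 0 := by
    refine List.eq_replicate_iff.mpr ⟨by simp, fun b hb => ?_⟩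
    obtain ⟨a, ha, rfl⟩ := List.mem_map.mp hb
    refine if_neg fun ⟨h_dvd, h_pos, _⟩ => ?_
    exact Nat.not_le.mpr (List.mem_range.mp ha) (Nat.le_of_dvd h_pos h_dvd)
  rw [longTurns, h_len, List.range_add, List.map_append, h_zero, List.range_succ_eq_map]
  simp only [List.map_cons, List.map_map, Function.comp_def, add_zero]
  congr 2
  · refine if_pos ⟨dvd_rfl, by omega, ?_⟩
    nlinarith [Nat.zero_le k, (by omega : 0 < 2 * g - 1)]
  · refine List.map_congr_left fun a _ => ?_
    have h_lt : 2 * g - 1 + (a + 1) < (2 * g - 1) * (k + 1 + 1) ↔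
        a + 1 < (2 * g - 1) * (k + 1) := by
      rw [mul_add _ (k + 1), mul_one, add_comm (2 * g - 1), Nat.add_lt_add_iff_right]
    simp [longTurn, h_lt]

theorem longTurns_add_one_lt (k : ℕ) : ∀ t ∈ longTurns g k, t + 1 < 4 * g := by
  intro t ht
  obtain ⟨a, -, rfl⟩ := List.mem_map.mp ht
  have := longTurn_le g k a
  omega

theorem IsTaut.map_mirror {ts : List ℕ} (h : IsTaut g ts) : IsTaut g (ts.map (mirror g)) := by
  refine ⟨fun t ht => ?_, fun k => ⟨fun hk => (h.2 k).2 ?_, fun hk => (h.2 k).1 ?_⟩⟩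
  · obtain ⟨t, -, rfl⟩ := List.mem_map.mp ht
    exact mirror_add_one_lt (by omega) t
  · simpa only [map_mirror_map_mirror h.1] using hk.map (mirror g)
  · simpa only [map_mirror_map_mirror h.1, map_mirror_map_mirror (longTurns_add_one_lt hg k)]
      using hk.map (mirror g)

theorem reflection_step {t : ℕ} (ht : t + 1 < 4 * g) (x : Minkowski) :
    reflection (step g t x) = step g (mirror g t) (reflection x) := by
  have h_angle : π + 2 * halfAngle g * ((mirror g t : ℕ) + 1) =
      -(π + 2 * halfAngle g * (t + 1)) + (2 : ℤ) * (2 * π) := by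
    rw [mirror, Nat.sub_sub, Nat.cast_sub (by omega)]
    push_cast
    linear_combination 2 * four_mul_mul_halfAngle hg
  simp only [step, LinearEquiv.mul_apply, reflection_boost, reflection_rotation, h_angle,
    rotation_add_int_mul_two_pi]

theorem path_map_mirror_edgeHead_fst {ts : List ℕ} (h : ∀ t ∈ ts, t + 1 < 4 * g) :
    (path g (ts.map (mirror g)) (edgeHead g)).1 = (path g ts (edgeHead g)).1 := by
  have h_refl : reflection (path g ts (edgeHead g)) =
      path g (ts.map (mirror g)) (edgeHead g) := by
    induction ts with
    | nil => simp [path, reflection_apply, edgeHead, boost_apply]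
    | cons t ts ih =>
      rw [List.forall_mem_cons] at h
      rw [path_cons, List.map_cons, path_cons, LinearEquiv.mul_apply, reflection_step hg h.1,
        ih h.2, LinearEquiv.mul_apply]
  rw [← h_refl, reflection_apply]

theorem IsTaut.cons_zero_of_replicate {ts : List ℕ}
    (h : IsTaut g (List.replicate (2 * g - 1) 0 ++ 1 :: ts)) : IsTaut g (0 :: ts) := by
  have h_ts : IsTaut g ts := h.of_infix ⟨List.replicate (2 * g - 1) 0 ++ [1], [], by simp⟩
  refine ⟨List.forall_mem_cons.mpr ⟨by omega, h_ts.1⟩, fun k => ⟨fun hk => ?_, fun hk => ?_⟩⟩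
  · rcases List.infix_cons_iff.mp hk with hk | hk
    · refine (h.2 (k + 1)).1 (List.IsPrefix.isInfix ?_)
      rw [longTurns_eq_cons] at hk
      rw [longTurns_succ hg]
      exact (List.prefix_append_right_inj _).mpr
        (List.cons_prefix_cons.mpr ⟨rfl, (List.cons_prefix_cons.mp hk).2⟩)
    · exact (h_ts.2 k).1 hk
  · rcases List.infix_cons_iff.mp hk with hk | hk
    · rw [longTurns_eq_cons, List.map_cons] at hk
      have := (List.cons_prefix_cons.mp hk).1
      simp only [mirror] at this
      omega
    · exact (h_ts.2 k).2 hk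

theorem IsTaut.lt_of_replicate_zero {k : ℕ} {ts : List ℕ}
    (h : IsTaut g (List.replicate k 0 ++ ts)) : k < 2 * g := by
  by_contra! hk
  refine (h.2 0).1 (List.IsInfix.trans ?_ (List.prefix_append _ ts).isInfix)
  rw [longTurns_zero]
  exact (List.prefix_replicate_iff.mpr ⟨by simp; omega, by simp⟩).isInfix

theorem path_zero_cons_edgeHead_fst (ts : List ℕ) :
    (path g (0 :: ts) (edgeHead g)).1 =
      (path g (List.replicate (2 * g - 1) 0 ++ 1 :: ts) (edgeHead g)).1 := by
  simp only [path_append, path_replicate, path_cons, LinearEquiv.mul_apply,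
    step_zero_pow_mul_step_one_fst hg]

theorem path_replicate_append_edgeHead_fst_pos {k t : ℕ} {ts : List ℕ}
    (h : IsTaut g (List.replicate k 0 ++ t :: ts)) (ht : t ≠ 0) (hkt : k = 0 → t + 2 < 4 * g)
    (ih : ∀ ts', ts'.length < k + ts.length + 1 → IsTaut g ts' →
      0 < (path g ts' (edgeHead g)).1) :
    0 < (path g (List.replicate k 0 ++ t :: ts) (edgeHead g)).1 := by
  have hk := h.lt_of_replicate_zero hg
  by_cases h_one : k + 1 = 2 * g ∧ t = 1
  · obtain ⟨h_len, rfl⟩ := h_one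
    obtain rfl : k = 2 * g - 1 := by omega
    rw [← path_zero_cons_edgeHead_fst hg]
    exact ih _ (by simp; omega) (h.cons_zero_of_replicate hg)
  · rw [path_append, path_replicate, path_cons, LinearEquiv.mul_apply, LinearEquiv.mul_apply]
    refine step_zero_pow_step_fst_pos hg hk (by omega) (h.1 t (by simp)) hkt (by omega)
      ((path_mem_orthochronous g ts).2 _ (edgeHead_mem_futureCone g)) (ih ts (by omega) ?_)
    exact h.of_infix ⟨List.replicate k 0 ++ [t], [], by simp⟩

theorem path_edgeHead_fst_pos_of_head {ts : List ℕ} (h : IsTaut g ts)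
    (h_head : ∀ t ∈ ts.head?, t + 2 < 4 * g)
    (ih : ∀ ts', ts'.length < ts.length → IsTaut g ts' → 0 < (path g ts' (edgeHead g)).1) :
    0 < (path g ts (edgeHead g)).1 := by
  rcases exists_eq_replicate_or_append 0 ts with ⟨k, rfl⟩ | ⟨k, t, rest, ht, rfl⟩
  · rw [path_replicate]
    exact step_zero_pow_edgeHead_fst_pos hg (IsTaut.lt_of_replicate_zero hg (ts := []) (by simpa))
  · refine path_replicate_append_edgeHead_fst_pos hg h ht ?_ fun ts' h_lt => ih ts' (by simp; omega)
    rintro rfl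
    exact h_head t rfl

/-- The first edge of a taut path points away from its wall, and the path never returns to it. -/
theorem IsTaut.path_edgeHead_fst_pos {ts : List ℕ} (h : IsTaut g ts) :
    0 < (path g ts (edgeHead g)).1 := by
  induction h_len : ts.length using Nat.strong_induction_on generalizing ts with
  | _ n ih =>
    subst h_len
    have ih' (ts' : List ℕ) (h_lt : ts'.length < ts.length) (h' : IsTaut g ts') :
        0 < (path g ts' (edgeHead g)).1 := ih _ h_lt h' rfl
    by_cases h_head : ∀ t ∈ ts.head?, t + 2 < 4 * g
    · exact path_edgeHead_fst_pos_of_head hg h h_head ih'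
    · -- The first turn is the largest possible one; its mirror image is `0`.
      push Not at h_head
      obtain ⟨t, ht, ht'⟩ := h_head
      rw [← path_map_mirror_edgeHead_fst hg h.1]
      refine path_edgeHead_fst_pos_of_head hg (h.map_mirror hg) ?_ (by simpa using ih')
      rw [List.head?_map, ht]
      rintro _ ⟨⟩
      simp only [mirror]
      omega

theorem IsTaut.path_unitX_ne {ts : List ℕ} {t : ℕ} (h : IsTaut g (ts ++ [t])) :
    path g (ts ++ [t]) unitX ≠ unitX ∧ path g (ts ++ [t]) unitX ≠ -unitX := by
  have h_sinh := sinh_halfEdge_pos hg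
  constructor <;> intro h_eq
  · have h_pos := (h.of_infix (List.prefix_append ts [t]).isInfix).path_edgeHead_fst_pos hg
    rw [← lorentz_unitX, ← h_eq, path_append, LinearEquiv.mul_apply,
      (path_mem_orthochronous g ts).1, path_cons, path, List.map_nil, List.prod_nil, mul_one,
      lorentz_step_unitX_edgeHead] at h_pos
    linarith
  · have h_pos := h.path_edgeHead_fst_pos hg
    have h_lorentz := (path_mem_orthochronous g (ts ++ [t])).1 unitX (edgeHead g)
    rw [h_eq, map_neg, LinearMap.neg_apply, lorentz_unitX, lorentz_unitX, edgeHead_fst] at h_lorentz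
    linarith

end TautTurns

section Crossings

variable {S G X : Type*} [Group G] [MulAction G X] (A : S → G) (b : S → X)

/-- The walls crossed by the word `w`, seen from its initial vertex: the letter `s` crosses the wall
`b s` and leads to the vertex seen in the frame `A s`. -/
def crossed : List S → List X
  | [] => []
  | s :: w => b s :: (crossed w).map (A s • ·)

/-- The permutation of walls with a parity that moves walls by `A s` and changes the parity of the
wall crossed by `s`. -/
def crossPerm [DecidableEq X] (s : S) : Equiv.Perm (X × ZMod 2) where
  toFun p := (A s • p.1, p.2 + if A s • p.1 = b s then 1 else 0)
  invFun p := ((A s)⁻¹ • p.1, p.2 - if p.1 = b s then 1 else 0)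
  left_inv p := by simp
  right_inv p := by simp

theorem length_crossed (w : List S) : (crossed A b w).length = w.length := by
  induction w with
  | nil => rfl
  | cons s w ih => simp [crossed, ih]

variable [DecidableEq X]

theorem crossPerm_apply (s : S) (p : X × ZMod 2) :
    crossPerm A b s p = (A s • p.1, p.2 + if A s • p.1 = b s then 1 else 0) := rfl

theorem prod_map_crossPerm_apply (w : List S) (p : X × ZMod 2) :
    (w.map (crossPerm A b)).prod p =
      ((w.map A).prod • p.1, p.2 + (crossed A b w).count ((w.map A).prod • p.1)) := by
  induction w with
  | nil => simp [crossed]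
  | cons s w ih =>
    have h_count := List.count_map_of_injective (crossed A b w) (A s • ·)
      (MulAction.injective (A s)) ((w.map A).prod • p.1)
    rw [List.map_cons, List.prod_cons, Equiv.Perm.mul_apply, ih, crossPerm_apply, List.map_cons,
      List.prod_cons, crossed, List.count_cons, mul_smul, h_count]
    simp only [beq_iff_eq, eq_comm (a := b s), Nat.cast_add, Nat.cast_ite, Nat.cast_one,
      Nat.cast_zero, add_assoc]

theorem crossPerm_mul_crossPerm_eq_one {s s' : S} (hA : A s * A s' = 1)
    (hb : A s • b s' = b s) : crossPerm A b s * crossPerm A b s' = 1 := by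
  ext1 p
  have h_iff : A s' • p.1 = b s' ↔ p.1 = b s := by
    rw [← hb, eq_inv_of_mul_eq_one_left hA, eq_inv_smul_iff]
  simp only [Equiv.Perm.mul_apply, crossPerm_apply, smul_smul, hA, one_smul, h_iff, add_assoc,
    CharTwo.add_self_eq_zero, add_zero, Equiv.Perm.one_apply]

theorem prod_map_crossPerm_eq_one {w : List S} {l : List X} (hA : (w.map A).prod = 1)
    (hl : crossed A b w = l ++ l) : (w.map (crossPerm A b)).prod = 1 := by
  ext1 p
  rw [prod_map_crossPerm_apply, hA, one_smul, hl, List.count_append, Nat.cast_add,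
    CharTwo.add_self_eq_zero, add_zero, Equiv.Perm.one_apply]

/-- A word that crosses each wall at most once is geodesic: a wall crossed once separates the
endpoints, and hence is crossed by every other path. -/
theorem length_le_of_nodup_crossed {w w' : List S}
    (h : (w.map (crossPerm A b)).prod = (w'.map (crossPerm A b)).prod)
    (hw : (crossed A b w).Nodup) : w.length ≤ w'.length := by
  have h_subset : crossed A b w ⊆ crossed A b w' := fun m hm => by
    have h_eq := DFunLike.congr_fun h ((w.map A).prod⁻¹ • m, 0)
    rw [prod_map_crossPerm_apply, prod_map_crossPerm_apply, smul_inv_smul,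
      List.count_eq_one_of_mem hw hm, Prod.mk.injEq] at h_eq
    rw [← h_eq.1] at h_eq
    by_contra h_notMem
    rw [List.count_eq_zero_of_not_mem h_notMem] at h_eq
    simp at h_eq
  simpa only [length_crossed] using (hw.subperm h_subset).length_le

end Crossings

section Walls

open scoped Pointwise

/-- The wall with unit normal `n`, encoded by its two unit normals. -/
def wall (n : Minkowski) : Set Minkowski := {n, -n}

/-- The walls crossed by a path with the given turns, in the frame of its first edge. -/
def walls (g : ℕ) : List ℕ → List (Set Minkowski)
  | [] => [wall unitX]
  | t :: ts => wall unitX :: (walls g ts).map (step g t • ·)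

theorem smul_wall (A : Minkowski ≃ₗ[ℝ] Minkowski) (n : Minkowski) :
    A • wall n = wall (A n) := by
  simp [wall, ← Set.image_smul, Set.image_pair]

theorem wall_neg (n : Minkowski) : wall (-n) = wall n := by
  rw [wall, wall, neg_neg, Set.pair_comm]

theorem wall_eq_wall_iff {m n : Minkowski} : wall m = wall n ↔ m = n ∨ m = -n := by
  refine ⟨fun h => ?_, ?_⟩
  · have hm : m ∈ wall n := h ▸ Set.mem_insert m {-m}
    simpa [wall] using hm
  · rintro (rfl | rfl)
    exacts [rfl, wall_neg n]

theorem mem_walls {g : ℕ} {ts : List ℕ} {m : Set Minkowski} (hm : m ∈ walls g ts) :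
    ∃ ts', ts' <+: ts ∧ m = path g ts' • wall unitX := by
  induction ts generalizing m with
  | nil => exact ⟨[], List.nil_prefix, by simpa [walls, path] using hm⟩
  | cons t ts ih =>
    rw [walls, List.mem_cons, List.mem_map] at hm
    rcases hm with rfl | ⟨m, hm, rfl⟩
    · exact ⟨[], List.nil_prefix, by simp [path]⟩
    · obtain ⟨ts', h_prefix, rfl⟩ := ih hm
      exact ⟨t :: ts', List.cons_prefix_cons.mpr ⟨rfl, h_prefix⟩, by rw [path_cons, mul_smul]⟩

theorem walls_replicate (g n t : ℕ) : walls g (List.replicate n t) =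
    (List.range (n + 1)).map fun i => (step g t ^ i) • wall unitX := by
  induction n with
  | zero => simp [walls]
  | succ n ih =>
    rw [List.replicate_succ, walls, ih, List.range_succ_eq_map (n := n + 1)]
    simp [Function.comp_def, pow_succ', mul_smul]

variable {g : ℕ} (hg : 2 ≤ g)
include hg

theorem IsTaut.nodup_walls {ts : List ℕ} (h : IsTaut g ts) : (walls g ts).Nodup := by
  induction ts with
  | nil => exact List.nodup_singleton _
  | cons t ts ih =>
    refine List.nodup_cons.mpr ⟨fun h_mem => ?_, (ih ?_).map (MulAction.injective _)⟩
    · obtain ⟨m, hm, h_eq⟩ := List.mem_map.mp h_mem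
      obtain ⟨ts', h_prefix, rfl⟩ := mem_walls hm
      rw [← mul_smul, ← path_cons, smul_wall, wall_eq_wall_iff] at h_eq
      have h_taut := h.of_infix (List.cons_prefix_cons.mpr ⟨rfl, h_prefix⟩).isInfix
      rw [← List.dropLast_append_getLast (List.cons_ne_nil t ts')] at h_taut h_eq
      exact h_eq.elim (h_taut.path_unitX_ne hg).1 (h_taut.path_unitX_ne hg).2
    · exact h.of_infix (List.suffix_cons t ts).isInfix

/-- The perpendicular bisectors of opposite sides of the `4g`-gon coincide. -/
theorem walls_replicate_zero : ∃ l, walls g (List.replicate (4 * g - 1) 0) = l ++ l := by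
  refine ⟨(List.range (2 * g)).map fun i => (step g 0 ^ i) • wall unitX, ?_⟩
  rw [walls_replicate, show 4 * g - 1 + 1 = 2 * g + 2 * g by omega, List.range_add,
    List.map_append, List.map_map]
  congr 1
  refine List.map_congr_left fun i _ => ?_
  rw [Function.comp_apply, add_comm, pow_add, mul_smul, smul_wall (step g 0 ^ (2 * g)),
    step_zero_pow_half_unitX hg, wall_neg]

end Walls

section Letters

variable {g : ℕ}

/-- The formal inverse of a signed letter. -/
def invLetter (s : Letter g) : Letter g := (s.1, !s.2)

/-- The position of a signed letter in the relator, counted from `0`. -/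
def relIndex (s : Letter g) : ℕ :=
  4 * ((s.1 : ℕ) / 2) + (s.1 : ℕ) % 2 + if s.2 then 0 else 2

/-- The turns of the path reading a given word. -/
def turns : List (Letter g) → List ℕ
  | [] => []
  | [_] => []
  | s :: t :: w => gapN s t :: turns (t :: w)

theorem invLetter_invLetter (s : Letter g) : invLetter (invLetter s) = s := by
  simp [invLetter]

theorem posLv_invLetter (s : Letter g) : posLv (invLetter s) = posArr s := by
  rcases s with ⟨ℓ, _ | _⟩ <;> rfl

theorem posArr_invLetter (s : Letter g) : posArr (invLetter s) = posLv s := by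
  rw [← posLv_invLetter, invLetter_invLetter]

theorem posLv_lt (s : Letter g) : posLv s < 4 * g := by
  have := s.1.2
  simp only [posLv, posOut, posIn]
  split_ifs <;> omega

theorem posArr_lt (s : Letter g) : posArr s < 4 * g :=
  posLv_invLetter s ▸ posLv_lt _

theorem even_posLv_add_posArr (s : Letter g) : Even (posLv s + posArr s) := by
  rw [Nat.even_iff]
  simp only [posLv, posArr, posOut, posIn]
  split_ifs <;> omega

theorem posLv_injective : Function.Injective (posLv (g := g)) := by
  rintro ⟨⟨ℓ, _⟩, _ | _⟩ ⟨⟨ℓ', _⟩, _ | _⟩ h <;>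
    simp only [posLv, posOut, posIn, Prod.mk.injEq, Fin.mk.injEq, Bool.false_eq_true,
      if_true, if_false, reduceCtorEq, and_true, and_false] at h ⊢ <;>
    split_ifs at h <;> omega

theorem gapN_lt (s t : Letter g) : gapN s t < 4 * g :=
  Nat.mod_lt _ (Nat.zero_lt_of_lt (posLv_lt s))

theorem gapN_modEq (s t : Letter g) : gapN s t + 1 + posArr s ≡ posLv t [MOD 4 * g] := by
  have h_arr := posArr_lt s
  calc gapN s t + 1 + posArr s = gapN s t + (posArr s + 1) := by ring
    _ ≡ posLv t + 4 * g - (posArr s + 1) + (posArr s + 1) [MOD 4 * g] :=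
      (Nat.mod_modEq _ _).add_right _
    _ = posLv t + 4 * g := Nat.sub_add_cancel (by omega)
    _ ≡ posLv t [MOD 4 * g] := Nat.add_modEq_right

theorem gapN_eq_iff {s t : Letter g} {k : ℕ} (hk : k < 4 * g) :
    gapN s t = k ↔ posLv t = posArr s + 1 + k ∨ posLv t + 4 * g = posArr s + 1 + k := by
  have ht := posLv_lt t
  have hs := posArr_lt s
  refine ⟨?_, fun h => ?_⟩
  · rintro rfl
    rcases lt_or_ge (posArr s) (posLv t) with h_lt | h_ge
    · left
      rw [gapN, Nat.mod_eq_sub_mod (by omega), Nat.mod_eq_of_lt (by omega)]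
      omega
    · right
      rw [gapN, Nat.mod_eq_of_lt (by omega)]
      omega
  · rcases h with h_eq | h_eq
    · rw [gapN, Nat.mod_eq_sub_mod (by omega), Nat.mod_eq_of_lt (by omega)]
      omega
    · rw [gapN, Nat.mod_eq_of_lt (by omega)]
      omega

theorem gapN_invLetter {s t : Letter g} (h : gapN s t + 1 < 4 * g) :
    gapN (invLetter t) (invLetter s) = mirror g (gapN s t) := by
  have h_eq := (gapN_eq_iff (gapN_lt s t)).mp rfl
  have := posLv_lt t
  have := posArr_lt s
  rw [gapN_eq_iff (by simp only [mirror]; omega), posLv_invLetter, posArr_invLetter]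
  simp only [mirror]
  omega

theorem eq_invLetter_of_gapN {s t : Letter g} (h : gapN s t + 1 = 4 * g) : t = invLetter s := by
  have h_eq := (gapN_eq_iff (gapN_lt s t)).mp rfl
  have := posLv_lt t
  refine posLv_injective ?_
  rw [posLv_invLetter]
  omega

theorem gapN_eq_zero_iff {s t : Letter g} : gapN s t = 0 ↔
    relIndex t = relIndex s + 1 ∨ relIndex t + 4 * g = relIndex s + 1 := by
  have hs := s.1.2
  have ht := t.1.2
  rw [gapN_eq_iff (by omega)]
  simp only [relIndex, posLv, posArr, posOut, posIn]
  split_ifs <;> omega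

theorem turns_eq_replicate {w : List (Letter g)} (h : w.IsChain (gapN · · = 0)) :
    turns w = List.replicate (w.length - 1) 0 := by
  induction w with
  | nil => rfl
  | cons s w ih =>
    cases w with
    | nil => rfl
    | cons t w =>
      rw [List.isChain_cons_cons] at h
      rw [turns, h.1, ih h.2]
      rfl

theorem turns_append_pair (w : List (Letter g)) (s t : Letter g) :
    turns (w ++ [s, t]) = turns (w ++ [s]) ++ [gapN s t] := by
  induction w with
  | nil => rfl
  | cons r w ih =>
    cases w with
    | nil => rfl
    | cons q w => exact congrArg (gapN r q :: ·) ih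

theorem turns_reverse_map_invLetter {w : List (Letter g)} (h : ∀ t ∈ turns w, t + 1 < 4 * g) :
    turns (w.map invLetter).reverse = ((turns w).map (mirror g)).reverse := by
  induction w with
  | nil => rfl
  | cons s w ih =>
    cases w with
    | nil => rfl
    | cons t w =>
      rw [turns, List.forall_mem_cons] at h
      rw [turns, List.map_cons (f := mirror g), List.reverse_cons, ← gapN_invLetter h.1, ← ih h.2]
      simp only [List.map_cons, List.reverse_cons, List.append_assoc, List.cons_append,
        List.nil_append, turns_append_pair]

end Letters

section LetterFrames

open Real
open scoped Pointwise

variable {g : ℕ}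

/-- The frame at the midpoint of the edge read by `s`, in the frame at its initial vertex. -/
def letterFrame (s : Letter g) : Minkowski ≃ₗ[ℝ] Minkowski :=
  rotation (2 * halfAngle g * posLv s) * boost (halfEdge g)

/-- The frame at the terminal vertex of the edge read by `s`, in the frame at its initial vertex. -/
def letterStep (s : Letter g) : Minkowski ≃ₗ[ℝ] Minkowski :=
  letterFrame s * (boost (halfEdge g) * rotation (π - 2 * halfAngle g * posArr s))

/-- The wall of the edge read by `s`, in the frame at its initial vertex. -/
def letterWall (s : Letter g) : Set Minkowski := wall (letterFrame s unitX)

theorem letterStep_mul_letterFrame_invLetter (s : Letter g) :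
    letterStep s * letterFrame (invLetter s) = letterFrame s * rotation π := by
  rw [letterStep, letterFrame.eq_def (invLetter s), posLv_invLetter,
    ← boost_mul_rotation_pi_mul_boost (halfEdge g)]
  simp only [mul_assoc]
  rw [← mul_assoc (rotation (π - _)), rotation_mul_rotation, sub_add_cancel]

theorem letterStep_mul_letterStep_invLetter (s : Letter g) :
    letterStep s * letterStep (invLetter s) = 1 := by
  rw [letterStep.eq_def (invLetter s), ← mul_assoc, letterStep_mul_letterFrame_invLetter,
    letterFrame, posArr_invLetter]
  calc rotation (2 * halfAngle g * posLv s) * boost (halfEdge g) * rotation π *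
        (boost (halfEdge g) * rotation (π - 2 * halfAngle g * posLv s))
      = rotation (2 * halfAngle g * posLv s) *
          (boost (halfEdge g) * rotation π * boost (halfEdge g)) *
          rotation (π - 2 * halfAngle g * posLv s) := by simp only [mul_assoc]
    _ = rotation (2 * π) := by
      rw [boost_mul_rotation_pi_mul_boost, rotation_mul_rotation, rotation_mul_rotation]
      congr 1
      ring
    _ = 1 := rotation_two_pi

theorem letterStep_smul_letterWall_invLetter (s : Letter g) :
    letterStep s • letterWall (invLetter s) = letterWall s := by
  have h_neg : rotation π unitX = -unitX := by
    ext <;> simp [rotation_apply, unitX]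
  rw [letterWall, smul_wall, ← LinearEquiv.mul_apply, letterStep_mul_letterFrame_invLetter,
    LinearEquiv.mul_apply, h_neg, map_neg, wall_neg, letterWall]

variable (hg : 2 ≤ g)
include hg

theorem letterStep_mul_letterFrame (s t : Letter g) :
    letterStep s * letterFrame t = letterFrame s * step g (gapN s t) := by
  obtain ⟨z, hz⟩ := Nat.modEq_iff_dvd.mp (gapN_modEq s t)
  have h_pos : (posLv t : ℝ) = gapN s t + 1 + posArr s + 4 * g * z := by
    have h_int : (posLv t : ℤ) = gapN s t + 1 + posArr s + 4 * g * z := by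
      push_cast at hz
      linarith
    exact_mod_cast h_int
  have h_angle : π - 2 * halfAngle g * posArr s + 2 * halfAngle g * posLv t =
      π + 2 * halfAngle g * (gapN s t + 1) + z * (2 * π) := by
    rw [h_pos, ← four_mul_mul_halfAngle hg]
    ring
  have h_rot : rotation (π - 2 * halfAngle g * posArr s) * rotation (2 * halfAngle g * posLv t) =
      rotation (π + 2 * halfAngle g * (gapN s t + 1)) := by
    rw [rotation_mul_rotation, h_angle, rotation_add_int_mul_two_pi]
  rw [letterStep, step, letterFrame.eq_def t, ← h_rot]
  simp only [mul_assoc (G := Minkowski ≃ₗ[ℝ] Minkowski)]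

theorem prod_map_letterStep_mul_letterFrame (s t : Letter g) (w : List (Letter g)) :
    ((s :: w).map letterStep).prod * letterFrame t =
      letterFrame s * path g (turns (s :: w ++ [t])) := by
  induction w generalizing s with
  | nil => simp [turns, path, letterStep_mul_letterFrame hg]
  | cons u w ih =>
    rw [List.map_cons, List.prod_cons, mul_assoc, ih, ← mul_assoc, letterStep_mul_letterFrame hg,
      mul_assoc, ← path_cons]
    rfl

theorem crossed_letterStep_letterWall (s : Letter g) (w : List (Letter g)) :
    crossed letterStep letterWall (s :: w) =
      (walls g (turns (s :: w))).map (letterFrame s • ·) := by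
  induction w generalizing s with
  | nil => simp [crossed, turns, walls, letterWall, smul_wall]
  | cons t w ih =>
    rw [crossed, ih, turns, walls, List.map_cons, smul_wall, letterWall, List.map_map,
      List.map_map]
    simp only [Function.comp_def, ← mul_smul, letterStep_mul_letterFrame hg]

end LetterFrames

section SurfaceGroup

open scoped Pointwise

variable {g : ℕ}

theorem length_relatorWord (g : ℕ) : (relatorWord g).length = 4 * g := by
  simp [relatorWord]

theorem relIndex_getElem_relatorWord {i : ℕ} (hi : i < (relatorWord g).length) :
    relIndex (relatorWord g)[i] = i := by
  simp only [relatorWord, List.getElem_map, List.getElem_finRange, relIndex, relLabel, relSign,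
    Fin.val_cast, decide_eq_true_eq]
  split_ifs <;> omega

theorem isChain_relatorWord : (relatorWord g).IsChain (gapN · · = 0) := by
  refine List.isChain_iff_getElem.mpr fun i hi => gapN_eq_zero_iff.mpr (.inl ?_)
  rw [relIndex_getElem_relatorWord, relIndex_getElem_relatorWord]

theorem wordG_append (w w' : List (Letter g)) : wordG (w ++ w') = wordG w * wordG w' := by
  simp only [wordG, List.map_append, List.prod_append]

theorem wordG_flatten_replicate (k : ℕ) (w : List (Letter g)) :
    wordG (List.replicate k w).flatten = wordG w ^ k := by
  simp [wordG, List.map_flatten, List.prod_flatten]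

theorem map_relatorF {G : Type*} [Group G] (φ : FreeGroup (Fin (2 * g)) →* G) :
    φ (relatorF g) = ((relatorWord g).map fun s : Letter g =>
      if s.2 then φ (FreeGroup.of s.1) else (φ (FreeGroup.of s.1))⁻¹).prod := by
  rw [relatorF, map_list_prod, List.map_map]
  simp only [Function.comp_def, apply_ite φ, map_inv]

theorem wordG_relatorWord : wordG (relatorWord g) = 1 :=
  (map_relatorF (PresentedGroup.mk {relatorF g})).symm.trans (PresentedGroup.one_of_mem rfl)

theorem prod_map_eq_of_wordG_eq {G : Type*} [Group G] {f : Letter g → G}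
    (h_inv : ∀ s, f s * f (invLetter s) = 1) (h_rel : ((relatorWord g).map f).prod = 1)
    {w w' : List (Letter g)} (h : wordG w = wordG w') : (w.map f).prod = (w'.map f).prod := by
  have h_letter (s : Letter g) : (if s.2 then f (s.1, true) else (f (s.1, true))⁻¹) = f s := by
    obtain ⟨i, _ | _⟩ := s
    · exact inv_eq_of_mul_eq_one_right (h_inv (i, true))
    · rfl
  have h_lift : ∀ r ∈ ({relatorF g} : Set _), FreeGroup.lift (fun i => f (i, true)) r = 1 := by
    rintro _ rfl
    simp only [map_relatorF, FreeGroup.lift_apply_of, h_letter, h_rel]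
  have h_word (v : List (Letter g)) :
      PresentedGroup.toGroup h_lift (wordG v) = (v.map f).prod := by
    rw [wordG, map_list_prod, List.map_map]
    simp only [Function.comp_def, letterG, apply_ite (PresentedGroup.toGroup h_lift), map_inv,
      PresentedGroup.toGroup.of, h_letter]
  rw [← h_word, h, h_word]

theorem exists_relatorWord_eq_cons (hg : g ≠ 0) : ∃ s w, relatorWord g = s :: w ∧
    turns (s :: w) = List.replicate (4 * g - 1) 0 ∧
    turns (s :: w ++ [s]) = List.replicate (4 * g) 0 := by
  have h_len := length_relatorWord g
  obtain ⟨s, w, h_word⟩ := List.exists_cons_of_length_pos (l := relatorWord g) (by omega)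
  have h_index : relIndex s = 0 := by
    simpa only [h_word, List.getElem_cons_zero] using
      relIndex_getElem_relatorWord (g := g) (i := 0) (by omega)
  have h_turns := turns_eq_replicate (isChain_relatorWord (g := g))
  have h_chain : (relatorWord g ++ [s]).IsChain (gapN · · = 0) := by
    refine List.isChain_append.mpr ⟨isChain_relatorWord, List.isChain_singleton s, ?_⟩
    intro t h_last u h_head
    obtain rfl : s = u := by simpa using h_head
    rw [List.getLast?_eq_getElem?, Option.mem_def, List.getElem?_eq_some_iff] at h_last
    obtain ⟨h_lt, rfl⟩ := h_last
    rw [gapN_eq_zero_iff, relIndex_getElem_relatorWord, h_index]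
    omega
  refine ⟨s, w, h_word, ?_, ?_⟩
  · rw [← h_word, h_turns, h_len]
  · rw [← h_word, turns_eq_replicate h_chain, List.length_append, h_len]
    rfl

variable (hg : 2 ≤ g)
include hg

theorem prod_map_letterStep_relatorWord : ((relatorWord g).map letterStep).prod = 1 := by
  obtain ⟨s, w, h_word, -, h_turns⟩ := exists_relatorWord_eq_cons (g := g) (by omega)
  have h_conj := prod_map_letterStep_mul_letterFrame hg s s w
  rw [h_turns, path_replicate, step_zero_pow_full hg, mul_one] at h_conj
  rw [h_word, mul_eq_right.mp h_conj]

open scoped Classical in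
theorem prod_map_crossPerm_relatorWord :
    ((relatorWord g).map (crossPerm letterStep letterWall)).prod = 1 := by
  obtain ⟨l, hl⟩ := walls_replicate_zero hg
  obtain ⟨s, w, h_word, h_turns, -⟩ := exists_relatorWord_eq_cons (g := g) (by omega)
  refine prod_map_crossPerm_eq_one _ _ (prod_map_letterStep_relatorWord hg)
    (l := l.map (letterFrame s • ·)) ?_
  rw [h_word, crossed_letterStep_letterWall hg, h_turns, hl, List.map_append]

theorem length_le_of_isTaut {w w' : List (Letter g)} (hw : IsTaut g (turns w))
    (h : wordG w = wordG w') : w.length ≤ w'.length := by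
  classical
  cases w with
  | nil => exact Nat.zero_le _
  | cons s w =>
    refine length_le_of_nodup_crossed letterStep letterWall
      (prod_map_eq_of_wordG_eq (fun s => ?_) ?_ h) ?_
    · exact crossPerm_mul_crossPerm_eq_one _ _ (letterStep_mul_letterStep_invLetter s)
        (letterStep_smul_letterWall_invLetter s)
    · exact prod_map_crossPerm_relatorWord hg
    · rw [crossed_letterStep_letterWall hg]
      exact (hw.nodup_walls hg).map (MulAction.injective _)

/-- Comparing long powers absorbs the conjugating words. -/
theorem length_le_of_forall_isTaut {w w' u v : List (Letter g)}
    (hw : ∀ k, IsTaut g (turns (List.replicate k w).flatten)) (huv : wordG v = (wordG u)⁻¹)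
    (h : wordG w = wordG (u ++ w' ++ v)) : w.length ≤ w'.length := by
  set k := u.length + v.length + 1
  have h_pow : wordG (List.replicate k w).flatten =
      wordG (u ++ (List.replicate k w').flatten ++ v) := by
    simp only [wordG_append, wordG_flatten_replicate, huv, h, conj_pow]
  have h_le := length_le_of_isTaut hg (hw k) h_pow
  simp only [List.length_append, List.length_flatten, List.map_replicate, List.sum_replicate,
    smul_eq_mul] at h_le
  by_contra! h_lt
  have : k * (w'.length + 1) ≤ k * w.length := Nat.mul_le_mul_left k h_lt
  grind

end SurfaceGroup

section Homotopy

variable {g : ℕ}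

theorem letterG_invLetter (s : Letter g) : letterG (invLetter s) = (letterG s)⁻¹ := by
  obtain ⟨i, _ | _⟩ := s <;> simp [letterG, invLetter]

namespace Complex

variable {Y : Complex g}

theorem wordOf_append (l l' : List Y.D) : Y.wordOf (l ++ l') = Y.wordOf l ++ Y.wordOf l' :=
  List.map_append

theorem wordOf_revW (l : List Y.D) :
    Y.wordOf (Y.revW l) = ((Y.wordOf l).map invLetter).reverse := by
  simp only [wordOf, revW, List.map_reverse, List.map_map]
  rfl

theorem wordG_wordOf_revW (l : List Y.D) :
    wordG (Y.wordOf (Y.revW l)) = (wordG (Y.wordOf l))⁻¹ := by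
  rw [wordOf_revW, wordG, wordG, List.prod_inv_reverse]
  simp only [List.map_reverse, List.map_map, Function.comp_def, letterG_invLetter]

variable {sE : Set Y.E} {sF : Set Y.F} (hF : ∀ f ∈ sF, Y.wordOf (Y.bdry f) = relatorWord g)
include hF

theorem faceLoop.wordG_eq_one {b : List Y.D} (hb : Y.faceLoop sF b) : wordG (Y.wordOf b) = 1 := by
  obtain ⟨f, hf, n, hb⟩ := hb
  have h_rotate : wordG (Y.wordOf ((Y.bdry f).rotate n)) = 1 := by
    rw [wordOf, wordG, List.map_rotate, List.map_rotate]
    exact List.prod_rotate_eq_one_of_prod_eq_one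
      ((congrArg wordG (hF f hf)).trans wordG_relatorWord) n
  rcases hb with rfl | rfl
  · exact h_rotate
  · rw [wordG_wordOf_revW, h_rotate, inv_one]

theorem elemMove.wordG_eq {l l' : List Y.D} (h : Y.elemMove sE sF l l') :
    wordG (Y.wordOf l) = wordG (Y.wordOf l') := by
  rcases h with ⟨l₁, l₂, d, -, rfl, rfl⟩ | ⟨l₁, l₂, b, hb, rfl, rfl⟩
  · have h_cancel : letterG (Y.dLet d) * letterG (Y.dLet (Y.dRev d)) = 1 := by
      rw [mul_eq_one_iff_inv_eq]
      exact (letterG_invLetter (Y.dLet d)).symm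
    rw [wordOf_append, wordOf_append, wordG_append, wordG_append]
    simp [wordOf, wordG, ← mul_assoc, h_cancel]
  · simp only [wordOf_append, wordG_append, hb.wordG_eq_one hF, mul_one]

theorem Homotopic.wordG_eq {u v : Y.V} {c c' : List Y.D} (h : Y.Homotopic sE sF u v c c') :
    wordG (Y.wordOf c) = wordG (Y.wordOf c') := by
  induction h with
  | rel _ _ h => exact h.2.2.2.2.elim (·.wordG_eq hF) (fun h' => (h'.wordG_eq hF).symm)
  | refl => rfl
  | symm _ _ _ ih => exact ih.symm
  | trans _ _ _ _ _ ih ih' => exact ih.trans ih'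

end Complex

end Homotopy

section Windows

variable {α β : Type*} {f : ℕ → α} {n : ℕ}

/-- The list of the `L` consecutive values of a sequence that start at index `i`. -/
def window (f : ℕ → α) (i L : ℕ) : List α := (List.range L).map fun a => f (i + a)

theorem length_window (f : ℕ → α) (i L : ℕ) : (window f i L).length = L := by
  simp [window]

theorem getElem_window {i L a : ℕ} (h : a < (window f i L).length) :
    (window f i L)[a] = f (i + a) := by
  simp [window]

theorem map_window (h : α → β) (f : ℕ → α) (i L : ℕ) :
    (window f i L).map h = window (h ∘ f) i L :=
  List.map_map

theorem window_append_window (f : ℕ → α) (i L L' : ℕ) :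
    window f i L ++ window f (i + L) L' = window f i (L + L') := by
  simp [window, List.range_add, Function.comp_def, add_assoc]

theorem flatten_map_window {s : ℕ → ℕ} (hs : Monotone s) (m : ℕ) :
    ((List.range m).map fun l => window f (s l) (s (l + 1) - s l)).flatten =
      window f (s 0) (s m - s 0) := by
  induction m with
  | zero => simp [window]
  | succ m ih =>
    have h_zero : s 0 ≤ s m := hs m.zero_le
    have h_succ : s m ≤ s (m + 1) := hs m.le_succ
    rw [List.range_succ, List.map_append, List.flatten_append, ih, List.map_singleton,
      List.flatten_singleton, show s (m + 1) - s 0 = s m - s 0 + (s (m + 1) - s m) by omega,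
      ← window_append_window, Nat.add_sub_cancel' h_zero]

theorem window_infix_window {i j L L' : ℕ} (hij : i ≤ j) (h : j + L' ≤ i + L) :
    window f j L' <:+: window f i L := by
  refine ⟨window f i (j - i), window f (j + L') (i + L - (j + L')), ?_⟩
  rw [show window f j L' = window f (i + (j - i)) L' by rw [Nat.add_sub_cancel' hij],
    window_append_window, show j + L' = i + (j - i + L') by omega, window_append_window]
  congr 1
  omega

theorem exists_eq_window_of_infix {l : List α} {i L : ℕ} (h : l <:+: window f i L) :
    ∃ j, l = window f j l.length := by
  obtain ⟨s, t, h_eq⟩ := h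
  refine ⟨i + s.length, List.ext_getElem (length_window ..).symm fun a ha _ => ?_⟩
  have h_lt : s.length + a < (window f i L).length := by
    rw [← h_eq]
    grind
  rw [getElem_window, add_assoc, ← getElem_window h_lt]
  grind

theorem isChain_window {R : α → α → Prop} {i L : ℕ} :
    (window f i L).IsChain R ↔ ∀ a, a + 1 < L → R (f (i + a)) (f (i + a + 1)) := by
  simp only [List.isChain_iff_getElem, getElem_window, length_window, add_assoc]

theorem flatten_replicate_window (hf : Function.Periodic f n) (m : ℕ) :
    (List.replicate m (window f 0 n)).flatten = window f 0 (m * n) := by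
  induction m with
  | zero => simp [window]
  | succ m ih =>
    have h_shift : window f 0 n = window f (0 + m * n) n :=
      List.map_congr_left fun a _ => by
        rw [zero_add, zero_add, Nat.add_comm (m * n)]
        exact (hf.nsmul m a).symm
    rw [List.replicate_succ', List.flatten_append, ih, List.flatten_singleton, h_shift,
      window_append_window, Nat.succ_mul]

theorem window_infix_append_self (hf : Function.Periodic f n) {i L : ℕ} (hn : 0 < n) (hL : L ≤ n) :
    window f i L <:+: window f 0 n ++ window f 0 n := by
  have h_twice := flatten_replicate_window hf 2
  have h_mod : window f i L = window f (i % n) L :=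
    List.map_congr_left fun a _ => by
      rw [← hf.map_mod_nat (i + a), ← hf.map_mod_nat (i % n + a), Nat.mod_add_mod]
  have h_lt := Nat.mod_lt i hn
  rw [show window f 0 n ++ window f 0 n = window f 0 (2 * n) by simpa using h_twice, h_mod]
  exact window_infix_window (Nat.zero_le _) (by omega)

theorem exists_periodic_window_eq {l : List α} (hl : l ≠ []) :
    ∃ f : ℕ → α, Function.Periodic f l.length ∧ window f 0 l.length = l := by
  have h_pos := List.length_pos_iff.mpr hl
  refine ⟨fun i => l[i % l.length]'(Nat.mod_lt _ h_pos), fun i => ?_, ?_⟩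
  · simp only [Nat.add_mod_right]
  · refine List.ext_getElem (length_window ..) fun a _ ha => ?_
    simp only [getElem_window, zero_add, Nat.mod_eq_of_lt ha]

theorem turns_window {g : ℕ} (x : ℕ → Letter g) (i L : ℕ) :
    turns (window x i L) = window (fun j => gapN (x j) (x (j + 1))) i (L - 1) := by
  have h_cons {γ : Type} (y : ℕ → γ) (i M : ℕ) :
      window y i (M + 1) = y i :: window y (i + 1) M := by
    rw [Nat.add_comm M 1, ← window_append_window]
    rfl
  cases L with
  | zero => rfl
  | succ L =>
    induction L generalizing i with
    | zero => rfl
    | succ L ih =>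
      rw [h_cons x, h_cons x, turns, ← h_cons x, ih]
      rw [Nat.add_sub_cancel, Nat.add_sub_cancel, h_cons _ i L]

end Windows

section PeriodicTurns

open Finset

variable {g n : ℕ}

theorem dvd_of_forall_gapN_eq_zero {x : ℕ → Letter g} (hx : Function.Periodic x n)
    (h : ∀ i, gapN (x i) (x (i + 1)) = 0) : 4 * g ∣ n := by
  have h_index (i : ℕ) : relIndex (x i) ≡ relIndex (x 0) + i [MOD 4 * g] := by
    induction i with
    | zero => rfl
    | succ i ih =>
      refine Nat.ModEq.trans ?_ (ih.add_right 1)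
      rcases gapN_eq_zero_iff.mp (h i) with h_eq | h_eq
      · rw [h_eq]
      · rw [← h_eq]
        exact Nat.add_modEq_right.symm
  have h_period := h_index n
  rw [← Nat.zero_add n, hx 0, Nat.zero_add] at h_period
  exact (Nat.modEq_zero_iff_dvd.mp (Nat.ModEq.add_left_cancel' (relIndex (x 0)) h_period.symm))

theorem even_add_sum_gapN {x : ℕ → Letter g} (hx : Function.Periodic x n) :
    Even (n + ∑ i ∈ range n, gapN (x i) (x (i + 1))) := by
  have h_gap (s t : Letter g) : Even (gapN s t + 1 + posArr s + posLv t) := by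
    have h_eq := (gapN_eq_iff (gapN_lt s t)).mp rfl
    rw [Nat.even_iff]
    omega
  have h_shift : ∑ i ∈ range n, posLv (x (i + 1)) = ∑ i ∈ range n, posLv (x i) := by
    have h_succ := (sum_range_succ (fun i => posLv (x i)) n).symm.trans
      (sum_range_succ' (fun i => posLv (x i)) n)
    rw [← Nat.zero_add n, hx 0, Nat.zero_add] at h_succ
    exact (Nat.add_right_cancel h_succ).symm
  have h_gaps : Even (∑ i ∈ range n,
      (gapN (x i) (x (i + 1)) + 1 + posArr (x i) + posLv (x (i + 1)))) :=
    even_sum _ fun i _ => h_gap (x i) (x (i + 1))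
  have h_letters : Even (∑ i ∈ range n, (posLv (x i) + posArr (x i))) :=
    even_sum _ fun i _ => even_posLv_add_posArr (x i)
  simp only [sum_add_distrib, h_shift, sum_const, card_range, smul_eq_mul, mul_one]
    at h_gaps h_letters
  grind

theorem longTurn_zero (g k : ℕ) : longTurn g k 0 = 0 := by
  simp [longTurn]

theorem longTurn_mul {k m : ℕ} (hm : 0 < m) (hmk : m ≤ k) (hg : 0 < g) :
    longTurn g k ((2 * g - 1) * m) = 1 :=
  if_pos ⟨dvd_mul_right _ _, Nat.mul_pos (by omega) hm,
    Nat.mul_lt_mul_of_pos_left (Nat.lt_succ_of_le hmk) (by omega)⟩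

theorem longTurn_mul_succ (g k : ℕ) : longTurn g k ((2 * g - 1) * (k + 1)) = 0 :=
  if_neg fun h => lt_irrefl _ h.2.2

theorem longTurn_of_not_dvd {k a : ℕ} (ha : ¬ 2 * g - 1 ∣ a) : longTurn g k a = 0 :=
  if_neg fun h => ha h.1

theorem reverse_longTurns (g k : ℕ) : (longTurns g k).reverse = longTurns g k := by
  have h_symm {a : ℕ} (ha : a ≤ (2 * g - 1) * (k + 1)) :
      longTurn g k ((2 * g - 1) * (k + 1) - a) = longTurn g k a := by
    refine if_congr ?_ rfl rfl
    rw [Nat.dvd_sub_iff_right ha (dvd_mul_right _ _)]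
    refine and_congr_right fun _ => ?_
    omega
  refine List.ext_getElem (List.length_reverse ..) fun a _ ha => ?_
  have h_lt : a < (2 * g - 1) * (k + 1) + 1 := by simpa [longTurns] using ha
  simp only [longTurns, List.getElem_reverse, List.getElem_map, List.getElem_range,
    List.length_map, List.length_range, Nat.add_sub_cancel]
  exact h_symm (Nat.le_of_lt_succ h_lt)

theorem longTurns_eq_window_iff {k j : ℕ} {τ : ℕ → ℕ} :
    longTurns g k = window τ j (longTurns g k).length ↔
      ∀ a ≤ (2 * g - 1) * (k + 1), τ (j + a) = longTurn g k a := by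
  simp [longTurns, window, eq_comm]

theorem not_dvd_mul_add {p m r : ℕ} (hr : 0 < r) (hrp : r < p) : ¬ p ∣ p * m + r := by
  rw [Nat.dvd_add_right (dvd_mul_right p m)]
  exact Nat.not_dvd_of_pos_of_lt hr hrp

theorem sum_longTurn {k : ℕ} (hg : 0 < g) :
    ∑ a ∈ range ((2 * g - 1) * k + 1), longTurn g k a = k := by
  have h_term : ∀ a ∈ range ((2 * g - 1) * k),
      longTurn g k (a + 1) = if 2 * g - 1 ∣ a + 1 then 1 else 0 := fun a ha => by
    have : a < (2 * g - 1) * k := mem_range.mp ha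
    have : a + 1 < (2 * g - 1) * (k + 1) := by
      rw [Nat.mul_succ]
      omega
    simp only [longTurn, Nat.succ_pos, this, and_true]
  rw [sum_range_succ', longTurn_zero, add_zero, sum_congr rfl h_term, ← card_filter,
    Nat.card_multiples, Nat.mul_div_cancel_left _ (by omega)]

section

variable {τ : ℕ → ℕ} {k : ℕ} (hτ : Function.Periodic τ n)
  (h : ∀ a ≤ (2 * g - 1) * (k + 1), τ a = longTurn g k a)
include hτ h

/-- A shorter period would move the turn `0` at index `0`, or the turn `1` at index `2 * g - 1`, to
an index with the other turn. -/
theorem lt_period_of_longTurn (hg : 2 ≤ g) (hn : 0 < n) (hk : 0 < k) :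
    (2 * g - 1) * k < n := by
  by_contra! h_le
  by_cases h_dvd : 2 * g - 1 ∣ n
  · obtain ⟨m, rfl⟩ := h_dvd
    have h_zero := hτ 0
    have hm : m ≤ k := Nat.le_of_mul_le_mul_left h_le (by omega)
    rw [Nat.zero_add, h 0 (Nat.zero_le _), h _ (Nat.mul_le_mul_left _ (by omega)), longTurn_zero,
      longTurn_mul (Nat.pos_of_mul_pos_left hn) hm (by omega)] at h_zero
    omega
  · have h_one := hτ ((2 * g - 1) * 1)
    have h_bound : (2 * g - 1) * 1 + n ≤ (2 * g - 1) * (k + 1) := by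
      rw [Nat.mul_succ _ k]
      omega
    rw [h _ h_bound, h _ (Nat.mul_le_mul_left _ (by omega)),
      longTurn_mul one_pos hk (by omega), longTurn_of_not_dvd] at h_one
    · omega
    · rwa [Nat.dvd_add_right (dvd_mul_right _ _)]

theorem eq_zero_of_lt_period (h_lt : (2 * g - 1) * k + 1 < n)
    (h_le : n ≤ (2 * g - 1) * (k + 1) + 1) {a : ℕ} (ha : a ≤ 2 * g - 1) :
    τ ((2 * g - 1) * k + 1 + a) = 0 := by
  rw [Nat.mul_succ] at h_le h
  rcases lt_or_ge ((2 * g - 1) * k + 1 + a) n with h_before | h_after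
  · rw [h _ (by omega)]
    rcases Nat.lt_or_ge (a + 1) (2 * g - 1) with h_a | h_a
    · rw [add_assoc]
      exact longTurn_of_not_dvd (not_dvd_mul_add (by omega) (by omega))
    · rw [show (2 * g - 1) * k + 1 + a = (2 * g - 1) * (k + 1) by rw [Nat.mul_succ]; omega,
        longTurn_mul_succ]
  · obtain ⟨b, h_b⟩ := Nat.exists_eq_add_of_le' h_after
    rw [h_b, hτ, h _ (by omega)]
    rcases Nat.eq_zero_or_pos b with rfl | h_pos
    · exact longTurn_zero g k
    · exact longTurn_of_not_dvd (Nat.not_dvd_of_pos_of_lt h_pos (by omega))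

/-- If the turns wrap around, then either the period is `(2 * g - 1) * k + 1`, which parity
excludes, or the turns next to the end of the first period are those of a long block. -/
theorem exists_longTurn_le_period (hg : 2 ≤ g) (hn : 0 < n)
    (h_dvd : (∀ i, τ i = 0) → 4 * g ∣ n) (h_even : Even (n + ∑ i ∈ range n, τ i)) :
    ∃ k' i, (2 * g - 1) * (k' + 1) + 2 ≤ n ∧
      ∀ a ≤ (2 * g - 1) * (k' + 1), τ (i + a) = longTurn g k' a := by
  rcases le_or_gt ((2 * g - 1) * (k + 1) + 2) n with h_fit | h_wrap
  · exact ⟨k, 0, h_fit, by simpa only [Nat.zero_add] using h⟩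
  rcases Nat.eq_zero_or_pos k with rfl | hk
  · have h_all (i : ℕ) : τ i = 0 := by
      have := Nat.mod_lt i hn
      rw [← hτ.map_mod_nat, h _ (by omega)]
      exact longTurn_zero_left g _
    have := Nat.le_of_dvd hn (h_dvd h_all)
    omega
  have h_lt := lt_period_of_longTurn hτ h hg hn hk
  rcases Nat.eq_or_lt_of_le (Nat.succ_le_of_lt h_lt) with rfl | h_lt'
  · have h_sum : ∑ i ∈ range ((2 * g - 1) * k + 1), τ i = k := by
      refine (sum_congr rfl fun a ha => h a ?_).trans (sum_longTurn (by omega))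
      have := mem_range.mp ha
      rw [Nat.mul_succ]
      omega
    have h_mul : (2 * g - 1) * k + k = 2 * (g * k) := by
      rw [← Nat.succ_mul, ← mul_assoc]
      congr 1
      omega
    rw [h_sum, Nat.even_iff] at h_even
    omega
  · refine ⟨0, (2 * g - 1) * k + 1, ?_, fun a ha => ?_⟩
    · have := Nat.le_mul_of_pos_right (2 * g - 1) hk
      omega
    · rw [Nat.zero_add, mul_one] at ha
      rw [eq_zero_of_lt_period hτ h h_lt' (by omega) ha]
      exact (longTurn_zero_left g a).symm

end

theorem exists_gapN_eq_longTurn_le_period (hg : 2 ≤ g) (hn : 0 < n) {x : ℕ → Letter g}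
    (hx : Function.Periodic x n) {k j : ℕ}
    (h : ∀ a ≤ (2 * g - 1) * (k + 1), gapN (x (j + a)) (x (j + a + 1)) = longTurn g k a) :
    ∃ k' i, (2 * g - 1) * (k' + 1) + 2 ≤ n ∧
      ∀ a ≤ (2 * g - 1) * (k' + 1), gapN (x (i + a)) (x (i + a + 1)) = longTurn g k' a := by
  have hy : Function.Periodic (fun a => x (j + a)) n := fun a => by
    simp only [← add_assoc, hx _]
  have hτ : Function.Periodic (fun a => gapN (x (j + a)) (x (j + a + 1))) n := fun a => by
    simp only [← add_assoc, add_right_comm _ n 1, hx _]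
  obtain ⟨k', i, h_le, h_turns⟩ := exists_longTurn_le_period hτ h hg hn
    (dvd_of_forall_gapN_eq_zero hy) (even_add_sum_gapN hy)
  refine ⟨k', j + i, h_le, fun a ha => ?_⟩
  rw [← h_turns a ha, add_assoc j]

end PeriodicTurns

section LongBlocksAndChains

variable {g k : ℕ}

/-- The number of edges in the first `l` blocks of a long chain of `k + 1` blocks. -/
def chainCut (g k l : ℕ) : ℕ := (2 * g - 1) * l + min l 1 + (l - k)

theorem monotone_chainCut (g k : ℕ) : Monotone (chainCut g k) := fun l l' h => by
  have := Nat.mul_le_mul_left (2 * g - 1) h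
  simp only [chainCut]
  omega

theorem chainCut_succ {l : ℕ} (hl : l < k) :
    chainCut g k (l + 1) = (2 * g - 1) * (l + 1) + 1 := by
  simp only [chainCut]
  omega

theorem chainCut_last (g k : ℕ) : chainCut g k (k + 1) = (2 * g - 1) * (k + 1) + 2 := by
  simp only [chainCut]
  omega

theorem chainCut_succ_sub (hk : 0 < k) {l : ℕ} (hl : l ≤ k) :
    chainCut g k (l + 1) - chainCut g k l = if 0 < l ∧ l < k then 2 * g - 1 else 2 * g - 1 + 1 := by
  simp only [chainCut, Nat.mul_succ]
  split_ifs <;> omega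

theorem longTurn_eq_zero_of_chainCut {l a : ℕ} (hl : l ≤ k) (ha : chainCut g k l ≤ a)
    (ha' : a + 1 < chainCut g k (l + 1)) : longTurn g k a = 0 := by
  refine if_neg ?_
  rintro ⟨⟨m, rfl⟩, h_pos, h_lt⟩
  have h_lm : l < m := by
    rcases Nat.eq_zero_or_pos l with rfl | hl₀
    · exact Nat.pos_of_mul_pos_left h_pos
    · refine Nat.lt_of_mul_lt_mul_left (a := 2 * g - 1) ?_
      simp only [chainCut] at ha
      omega
  have h_ml : m < l + 1 := by
    rcases hl.lt_or_eq with hl | rfl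
    · rw [chainCut_succ hl] at ha'
      exact Nat.lt_of_mul_lt_mul_left (Nat.lt_of_succ_lt_succ ha')
    · exact Nat.lt_of_mul_lt_mul_left h_lt
  omega

variable {Y : Complex g} {d : ℕ → Y.D} {i : ℕ}

/-- The consecutive segments of a path, starting at index `i`, that have the lengths of the blocks
of a long chain of `k + 1` blocks. -/
def chainSegments (d : ℕ → Y.D) (i k : ℕ) : List (List Y.D) :=
  (List.range (k + 1)).map fun l =>
    window d (i + chainCut g k l) (chainCut g k (l + 1) - chainCut g k l)

theorem flatten_chainSegments (d : ℕ → Y.D) (i k : ℕ) :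
    (chainSegments d i k).flatten = window d i ((2 * g - 1) * (k + 1) + 2) := by
  have h_flatten := flatten_map_window (f := d) ((monotone_chainCut g k).const_add i) (k + 1)
  simp only [Nat.add_sub_add_left] at h_flatten
  rw [chainSegments, h_flatten, chainCut_last]
  simp [chainCut]

theorem map_length_chainSegments (hg : 0 < g) (hk : 0 < k) :
    (chainSegments d i k).map List.length =
      2 * g :: (List.replicate (k - 1) (2 * g - 1) ++ [2 * g]) := by
  have h_lengths : (chainSegments d i k).map List.length = (List.range (k + 1)).map fun l =>
      if 0 < l ∧ l < k then 2 * g - 1 else 2 * g - 1 + 1 := by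
    rw [chainSegments, List.map_map]
    refine List.map_congr_left fun l hl => ?_
    rw [Function.comp_apply, length_window,
      chainCut_succ_sub hk (Nat.le_of_lt_succ (List.mem_range.mp hl))]
  rw [h_lengths]
  refine List.ext_getElem (by simp; omega) fun a _ _ => ?_
  grind

theorem isBlock_window (hd : ∀ i, Y.adj (d i) (d (i + 1))) {L : ℕ} (hL : 0 < L) (hL' : L ≤ 4 * g)
    (h : ∀ a, a + 1 < L → gapN (Y.dLet (d (i + a))) (Y.dLet (d (i + a + 1))) = 0) :
    Y.IsBlock (window d i L) := by
  refine ⟨List.ne_nil_of_length_pos ?_, ?_, isChain_window.mpr fun a ha => ⟨hd _, h a ha⟩⟩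
  · rwa [length_window]
  · rwa [length_window]

theorem chainStep_window (hd : ∀ i, Y.adj (d i) (d (i + 1))) {L L' : ℕ} (hL : 0 < L) (hL' : 0 < L')
    (h : gapN (Y.dLet (d (i + (L - 1)))) (Y.dLet (d (i + (L - 1) + 1))) = 1) :
    Y.chainStep (window d i L) (window d (i + L) L') := by
  refine ⟨d (i + (L - 1)), d (i + (L - 1) + 1), ?_, ?_, hd _, h⟩
  · rw [List.getLast?_eq_getElem?, length_window]
    simp [window, hL]
  · rw [List.head?_eq_getElem?, Nat.add_assoc, Nat.sub_add_cancel hL]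
    simp [window, hL']

theorem isLongChain_chainSegments (hg : 2 ≤ g) (hd : ∀ i, Y.adj (d i) (d (i + 1))) (hk : 0 < k)
    (h : ∀ a ≤ (2 * g - 1) * (k + 1),
      gapN (Y.dLet (d (i + a))) (Y.dLet (d (i + a + 1))) = longTurn g k a) :
    Y.IsLongChain (chainSegments d i k) := by
  refine ⟨⟨by simp [chainSegments], fun b hb => ?_, ?_⟩, k - 1,
    map_length_chainSegments (by omega) hk⟩
  · obtain ⟨l, hl, rfl⟩ := List.mem_map.mp hb
    have hl : l ≤ k := Nat.le_of_lt_succ (List.mem_range.mp hl)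
    have h_last := monotone_chainCut g k (Nat.succ_le_succ hl)
    rw [Nat.succ_eq_add_one, Nat.succ_eq_add_one, chainCut_last] at h_last
    have h_sub := chainCut_succ_sub (g := g) hk hl
    refine isBlock_window hd ?_ ?_ fun a ha => ?_
    · rw [h_sub]
      split_ifs <;> omega
    · rw [h_sub]
      split_ifs <;> omega
    · rw [add_assoc i, h _ (by omega)]
      exact longTurn_eq_zero_of_chainCut hl (Nat.le_add_right _ _) (by omega)
  · refine (List.isChain_map _).mpr ((List.isChain_range_succ _ _).mpr fun l hl => ?_)
    have h_sub := chainCut_succ_sub (g := g) hk hl.le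
    have h_sub' := chainCut_succ_sub (g := g) hk hl
    have h_le : chainCut g k l ≤ chainCut g k (l + 1) := monotone_chainCut g k l.le_succ
    have h_turn : i + chainCut g k l + (chainCut g k (l + 1) - chainCut g k l - 1) =
        i + (2 * g - 1) * (l + 1) := by
      rw [h_sub]
      simp only [chainCut, Nat.mul_succ]
      split_ifs <;> omega
    rw [show i + chainCut g k (l + 1) =
      i + chainCut g k l + (chainCut g k (l + 1) - chainCut g k l) by omega]
    refine chainStep_window hd ?_ ?_ ?_
    · rw [h_sub]
      split_ifs <;> omega
    · rw [h_sub']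
      split_ifs <;> omega
    · rw [h_turn, h _ (Nat.mul_le_mul_left _ (by omega)),
        longTurn_mul (Nat.succ_pos l) hl (by omega)]

end LongBlocksAndChains

section Cycles

variable {g : ℕ}

theorem cycContains_window {α : Type*} {f : ℕ → α} {n L : ℕ} (hf : Function.Periodic f n)
    (hL : 0 < L) (hLn : L ≤ n) (i : ℕ) : cycContains (window f 0 n) (window f i L) := by
  refine ⟨List.ne_nil_of_length_pos ?_, ?_, window_infix_append_self hf (hL.trans_le hLn) hLn⟩
  · rwa [length_window]
  · rwa [length_window, length_window]

namespace Complex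

variable {Y : Complex g}

theorem WalkFrom.append {u v w : Y.V} {l l' : List Y.D} (h : Y.WalkFrom u v l)
    (h' : Y.WalkFrom v w l') : Y.WalkFrom u w (l ++ l') := by
  induction h with
  | nil => exact h'
  | cons d _ ih => exact .cons d (ih h')

theorem WalkFrom.isChain {u v : Y.V} {l : List Y.D} (h : Y.WalkFrom u v l) :
    l.IsChain Y.adj := by
  have h_head {u' v' : Y.V} {l' : List Y.D} (h' : Y.WalkFrom u' v' l') :
      ∀ d ∈ l'.head?, u' = Y.dTail d := by
    cases h' <;> simp
  induction h with
  | nil => exact .nil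
  | cons d h ih => exact List.isChain_cons.mpr ⟨h_head h, ih⟩

theorem WalkFrom.revW {u v : Y.V} {l : List Y.D} (h : Y.WalkFrom u v l) :
    Y.WalkFrom v u (Y.revW l) := by
  induction h with
  | nil v => exact .nil v
  | cons d _ ih =>
    have h_rev : Y.WalkFrom (Y.dHead d) (Y.dTail d) [Y.dRev d] := by
      obtain ⟨e, _ | _⟩ := d
      exacts [.cons (e, true) (.nil _), .cons (e, false) (.nil _)]
    simpa [Complex.revW] using ih.append h_rev

theorem IsCycle.revW {c : List Y.D} (hc : Y.IsCycle c) : Y.IsCycle (Y.revW c) :=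
  ⟨by simpa [Complex.revW] using hc.1, hc.2.imp fun _ h => h.revW⟩

theorem IsCycle.exists_periodic {c : List Y.D} (hc : Y.IsCycle c) :
    ∃ (n : ℕ) (d : ℕ → Y.D), 0 < n ∧ Function.Periodic d n ∧ c = window d 0 n ∧
      ∀ i, Y.adj (d i) (d (i + 1)) := by
  obtain ⟨h_ne, v, h_walk⟩ := hc
  obtain ⟨d, hd, h_window⟩ := exists_periodic_window_eq h_ne
  have h_pos := List.length_pos_iff.mpr h_ne
  refine ⟨c.length, d, h_pos, hd, h_window.symm, fun i => ?_⟩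
  have h_twice : c ++ c = window d 0 (2 * c.length) := by
    simpa [h_window] using flatten_replicate_window hd 2
  have h_chain := (h_walk.append h_walk).isChain
  rw [h_twice, isChain_window] at h_chain
  have h_lt := Nat.mod_lt i h_pos
  have h_adj := h_chain (i % c.length) (by omega)
  rwa [Nat.zero_add, hd.map_mod_nat, ← hd.map_mod_nat (_ + 1), Nat.mod_add_mod,
    hd.map_mod_nat] at h_adj

theorem turns_wordOf_flatten_replicate_window {d : ℕ → Y.D} {n : ℕ} (hd : Function.Periodic d n)
    (m : ℕ) : turns (Y.wordOf (List.replicate m (window d 0 n)).flatten) =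
      window (fun i => gapN (Y.dLet (d i)) (Y.dLet (d (i + 1)))) 0 (m * n - 1) := by
  rw [flatten_replicate_window hd, wordOf, map_window, turns_window]
  rfl

theorem not_noLongBlockOrChainCyc_window (hg : 2 ≤ g) {d : ℕ → Y.D} {n k i : ℕ}
    (hd : Function.Periodic d n) (h_adj : ∀ i, Y.adj (d i) (d (i + 1)))
    (hn : (2 * g - 1) * (k + 1) + 2 ≤ n) (h : ∀ a ≤ (2 * g - 1) * (k + 1),
      gapN (Y.dLet (d (i + a))) (Y.dLet (d (i + a + 1))) = longTurn g k a) :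
    ¬ Y.NoLongBlockOrChainCyc (window d 0 n) := by
  rintro ⟨h_block, h_chain⟩
  rcases Nat.eq_zero_or_pos k with rfl | hk
  · refine h_block _ (cycContains_window hd (L := 2 * g + 1) (by omega) (by omega) i)
      ⟨isBlock_window h_adj (by omega) (by omega) fun a ha => ?_, (length_window ..).ge⟩
    rw [h a (by omega), longTurn_zero_left]
  · refine h_chain _ (isLongChain_chainSegments hg h_adj hk h) ?_
    rw [flatten_chainSegments]
    exact cycContains_window hd (by omega) hn i

theorem not_longTurns_infix_turns (hg : 2 ≤ g) {c : List Y.D} (hc : Y.IsCycle c)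
    (h : Y.NoLongBlockOrChainCyc c) (k m : ℕ) :
    ¬ longTurns g k <:+: turns (Y.wordOf (List.replicate m c).flatten) := by
  obtain ⟨n, d, hn, hd, rfl, h_adj⟩ := hc.exists_periodic
  rw [turns_wordOf_flatten_replicate_window hd]
  intro h_infix
  obtain ⟨j, h_eq⟩ := exists_eq_window_of_infix h_infix
  obtain ⟨k', i, h_le, h_turns⟩ := exists_gapN_eq_longTurn_le_period hg hn
    (hd.comp Y.dLet) (longTurns_eq_window_iff.mp h_eq)
  exact not_noLongBlockOrChainCyc_window hg hd h_adj h_le h_turns h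

theorem P1.eq_dRev (hP1 : Y.P1) {d d' : Y.D} (h_adj : Y.adj d d')
    (h : Y.dLet d' = invLetter (Y.dLet d)) : d' = Y.dRev d := by
  obtain ⟨e, b⟩ := d
  obtain ⟨e', b'⟩ := d'
  obtain ⟨h_lab, rfl⟩ : Y.lab e' = Y.lab e ∧ b' = !b := Prod.ext_iff.mp h
  cases b
  · rw [dRev, hP1.1 e' e h_adj.symm h_lab]
  · rw [dRev, hP1.2 e' e h_adj.symm h_lab]

theorem NonBacktrackingCyc.gapN_add_one_lt {d : ℕ → Y.D} {n : ℕ} (hn : 0 < n)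
    (h : Y.NonBacktrackingCyc (window d 0 n)) (hd : Function.Periodic d n) (hP1 : Y.P1)
    (h_adj : ∀ i, Y.adj (d i) (d (i + 1))) (i : ℕ) :
    gapN (Y.dLet (d i)) (Y.dLet (d (i + 1))) + 1 < 4 * g := by
  refine lt_of_le_of_ne (gapN_lt _ _) fun h_gap => ?_
  have h_rev := hP1.eq_dRev (h_adj i) (eq_invLetter_of_gapN h_gap)
  rcases (Nat.succ_le_of_lt hn).eq_or_lt with rfl | hn₂
  · rw [hd i] at h_rev
    exact Bool.not_ne_self _ (congrArg Prod.snd h_rev).symm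
  · refine h ⟨d i, ?_⟩
    rw [← h_rev]
    exact cycContains_window hd two_pos hn₂ i

theorem flatten_replicate_revW (m : ℕ) (l : List Y.D) :
    (List.replicate m (Y.revW l)).flatten = Y.revW (List.replicate m l).flatten := by
  rw [Complex.revW, Complex.revW, List.map_flatten, List.reverse_flatten]
  simp

theorem isTaut_turns_replicate (hg : 2 ≤ g) (hP1 : Y.P1) {c : List Y.D} (hc : Y.IsCycle c)
    (hnb : Y.NonBacktrackingCyc c) (h1 : Y.NoLongBlockOrChainCyc c)
    (h2 : Y.NoLongBlockOrChainCyc (Y.revW c)) (m : ℕ) :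
    IsTaut g (turns (List.replicate m (Y.wordOf c)).flatten) := by
  have h_word : (List.replicate m (Y.wordOf c)).flatten =
      Y.wordOf (List.replicate m c).flatten := by
    simp [wordOf, List.map_flatten]
  have h_lt : ∀ t ∈ turns (Y.wordOf (List.replicate m c).flatten), t + 1 < 4 * g := by
    obtain ⟨n, d, hn, hd, rfl, h_adj⟩ := hc.exists_periodic
    rw [turns_wordOf_flatten_replicate_window hd, window, List.forall_mem_map]
    exact fun a _ => hnb.gapN_add_one_lt hn hd hP1 h_adj (0 + a)
  rw [h_word]
  refine ⟨h_lt, fun k => ⟨not_longTurns_infix_turns hg hc h1 k m, fun h_infix => ?_⟩⟩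
  refine not_longTurns_infix_turns hg hc.revW h2 k m ?_
  rw [flatten_replicate_revW, wordOf_revW, turns_reverse_map_invLetter h_lt, ← reverse_longTurns,
    List.reverse_infix, ← map_mirror_map_mirror (longTurns_add_one_lt hg k)]
  exact h_infix.map _

theorem IsTiledSurface.p1 (hY : Y.IsTiledSurface) : Y.P1 := by
  obtain ⟨Z, hZ, φ, -, hφ, -⟩ := hY
  refine ⟨fun e e' h_src h_lab => hφ (hZ.1.1 _ _ ?_ ?_), fun e e' h_dst h_lab =>
    hφ (hZ.1.2 _ _ ?_ ?_)⟩
  · rw [φ.hsrc, φ.hsrc, h_src]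
  · rw [φ.hlab, φ.hlab, h_lab]
  · rw [φ.hdst, φ.hdst, h_dst]
  · rw [φ.hlab, φ.hlab, h_lab]

theorem IsTiledSurface.wordOf_bdry (hY : Y.IsTiledSurface) (f : Y.F) :
    Y.wordOf (Y.bdry f) = relatorWord g := by
  obtain ⟨Z, hZ, φ, -⟩ := hY
  have h_dLet (d : Y.D) : Z.dLet (φ.mE d.1, d.2) = Y.dLet d :=
    congrArg (·, d.2) (φ.hlab d.1)
  rw [← (hZ.2.1.1 (φ.mF f)).2, φ.hbdry, wordOf, wordOf, List.map_map]
  exact List.map_congr_left fun d _ => (h_dLet d).symm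

end Complex

end Cycles

theorem statement_6_general {g : ℕ} (hg : 2 ≤ g) {Y : Complex g} (hP1 : Y.P1) {sE : Set Y.E}
    {sF : Set Y.F} (hF : ∀ f ∈ sF, Y.wordOf (Y.bdry f) = relatorWord g) {c : List Y.D}
    (hc : Y.IsCycle c) (hnb : Y.NonBacktrackingCyc c) (h1 : Y.NoLongBlockOrChainCyc c)
    (h2 : Y.NoLongBlockOrChainCyc (Y.revW c)) : Y.ShortestRep sE sF c := by
  rintro c' ⟨u, v, q, -, -, -, -, -, -, h_homotopic⟩
  have h_word := h_homotopic.wordG_eq hF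
  rw [Complex.wordOf_append, Complex.wordOf_append] at h_word
  simpa only [Complex.wordOf, List.length_map] using length_le_of_forall_isTaut hg
    (Complex.isTaut_turns_replicate hg hP1 hc hnb h1 h2) (Complex.wordG_wordOf_revW q) h_word

/-- Let `Y` be a tiled surface and `C` (= `c`) a non-backtracking
cycle in `Y^(1)`.  If neither `C` nor `C*` contains a long block or a long chain,
then `C` is a shortest representative of its free homotopy class in `Y`. -/
theorem statement_6 (g : ℕ) (hg : 2 ≤ g) (Y : Complex g) (hY : Y.IsTiledSurface)
    (c : List Y.D) (hc : Y.IsCycle c) (hnb : Y.NonBacktrackingCyc c)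
    (h1 : Y.NoLongBlockOrChainCyc c) (h2 : Y.NoLongBlockOrChainCyc (Y.revW c)) :
    Y.ShortestRep Set.univ Set.univ c :=
  statement_6_general hg hY.p1 (fun f _ => hY.wordOf_bdry f) hc hnb h1 h2

end CS

end
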